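/- arXiv:2412.18704 — 9 statements merged into one kernel-verified Lean document; each statement's English description precedes it below -/
import Mathlib

section
/- For every natural number n ≥ 2 there exists a countably infinite set D ⊆ ℚ^n that is dense in ℚ^n with respect to the product topology and such that any two distinct points of D differ in every coordinate (i.e., no two distinct points of D share a coordinate). -/
/-!
Enumerate the nonempty members of a countable base of the product and shrink each to a nonempty open
box. In every factor, the sides of these boxes form a countable family of infinite sets, so one can
pick points from them injectively. Doing this in each factor separately gives one point in each
box, and points belonging to different boxes differ in every coordinate.
-/

open Set Topology TopologicalSpace

theorem exists_injective_forall_mem_of_infinite {β α : Type*} [Countable β] {s : β → Set α}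
    (hs : ∀ b, (s b).Infinite) : ∃ f : β → α, Function.Injective f ∧ ∀ b, f b ∈ s b := by
  classical
  -- Hall's theorem needs finite sets, so cut `s b` down to `e b + 1` elements: then a finite set of
  -- indices is no larger than the set attached to its member of largest code.
  obtain ⟨e, he⟩ := exists_injective_nat β
  choose t ht_sub ht_card using fun b => (hs b).exists_subset_card_eq (e b + 1)
  have hall_condition (S : Finset β) : S.card ≤ (S.biUnion t).card := by
    obtain rfl | hS := S.eq_empty_or_nonempty
    · simp
    obtain ⟨m, hm, hmax⟩ := S.exists_max_image e hS
    calc S.card ≤ (Finset.range (e m + 1)).card :=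
          Finset.card_le_card_of_injOn e
            (fun b hb => Finset.mem_coe.2 (Finset.mem_range_succ_iff.2 (hmax b hb))) he.injOn
      _ = (t m).card := by rw [Finset.card_range, ht_card]
      _ ≤ (S.biUnion t).card := Finset.card_le_card (Finset.subset_biUnion_of_mem t hm)
  obtain ⟨f, hf, hft⟩ := (Finset.all_card_le_biUnion_card_iff_exists_injective t).1 hall_condition
  exact ⟨f, hf, fun b => ht_sub b (hft b)⟩

theorem infinite_of_dense {X : Type*} [TopologicalSpace X] [T1Space X] [Infinite X] {s : Set X}
    (hs : Dense s) : s.Infinite := by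
  intro hfin
  have s_eq_univ : s = univ := hfin.isClosed.closure_eq.symm.trans hs.closure_eq
  exact infinite_univ (s_eq_univ ▸ hfin)

section Pi

variable {ι : Type*} {X : ι → Type*} [∀ i, TopologicalSpace (X i)]

theorem exists_univ_pi_subset_of_isOpen {U : Set (∀ i, X i)} (hU : IsOpen U) (hne : U.Nonempty) :
    ∃ V : ∀ i, Set (X i), (∀ i, IsOpen (V i) ∧ (V i).Nonempty) ∧ univ.pi V ⊆ U := by
  classical
  obtain ⟨x, hx⟩ := hne
  obtain ⟨I, V, hV, hVU⟩ := isOpen_pi_iff.1 hU x hx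
  refine ⟨fun i => if i ∈ I then V i else univ, fun i => ?_, ?_⟩
  · by_cases hi : i ∈ I
    · simpa only [if_pos hi] using ⟨(hV i hi).1, x i, (hV i hi).2⟩
    · simpa only [if_neg hi] using ⟨isOpen_univ, x i, mem_univ _⟩
  · refine fun y hy => hVU fun i hi => ?_
    simpa only [if_pos (Finset.mem_coe.1 hi)] using hy i (mem_univ i)

variable (X) [Countable ι] [∀ i, SecondCountableTopology (X i)] [∀ i, T1Space (X i)]
  [∀ i (x : X i), (𝓝[≠] x).NeBot]

theorem exists_countable_dense_pairwise_forall_ne :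
    ∃ D : Set (∀ i, X i), D.Countable ∧ Dense D ∧ D.Pairwise fun a b => ∀ i, a i ≠ b i := by
  have : Countable (countableBasis (∀ i, X i)) := (countable_countableBasis _).to_subtype
  choose V hV hVU using fun U : countableBasis (∀ i, X i) => exists_univ_pi_subset_of_isOpen
    (isOpen_of_mem_countableBasis U.2) (nonempty_of_mem_countableBasis U.2)
  have side_infinite (i : ι) (U : countableBasis (∀ i, X i)) : (V U i).Infinite := by
    obtain ⟨hopen, x, hx⟩ := hV U i
    exact infinite_of_mem_nhds x (hopen.mem_nhds hx)
  choose f hf_inj hf_mem using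
    fun i => exists_injective_forall_mem_of_infinite (side_infinite i)
  refine ⟨range fun U i => f i U, countable_range _, ?_, ?_⟩
  · refine (isBasis_countableBasis _).dense_iff.2 fun U hU _ => ?_
    exact ⟨fun i => f i ⟨U, hU⟩, hVU ⟨U, hU⟩ fun i _ => hf_mem i ⟨U, hU⟩, mem_range_self _⟩
  · rintro _ ⟨U, rfl⟩ _ ⟨W, rfl⟩ hne i heq
    exact hne (by rw [hf_inj i heq])

theorem stmt_0_general [Nonempty ι] [∀ i, Nonempty (X i)] :
    ∃ D : Set (∀ i, X i), D.Countable ∧ D.Infinite ∧ Dense D ∧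
      ∀ a ∈ D, ∀ b ∈ D, a ≠ b → ∀ i, a i ≠ b i := by
  have (i : ι) : Infinite (X i) :=
    infinite_univ_iff.1 (infinite_of_mem_nhds (Classical.arbitrary (X i)) Filter.univ_mem)
  obtain ⟨D, hcountable, hdense, hne⟩ := exists_countable_dense_pairwise_forall_ne X
  exact ⟨D, hcountable, infinite_of_dense hdense, hdense, fun a ha b hb => hne ha hb⟩

end Pi

/-- For every natural number `n ≥ 2` there exists a countably infinite set
`D ⊆ ℚ^n` that is dense in `ℚ^n` with respect to the product topology and such that any
two distinct points of `D` differ in every coordinate. -/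
theorem stmt_0 (n : ℕ) (hn : 2 ≤ n) :
    ∃ D : Set (Fin n → ℚ), D.Countable ∧ D.Infinite ∧ Dense D ∧
      ∀ a ∈ D, ∀ b ∈ D, a ≠ b → ∀ i : Fin n, a i ≠ b i := by
  have : NeZero n := ⟨by omega⟩
  exact stmt_0_general fun _ : Fin n => ℚ
end

section
/- For every n ≥ 2, the class of finite partial orders of dimension at most n fails the amalgamation property: there exist finite partial orders (A,<), (B,<), (C,<), each of dimension at most n, and order embeddings e : A → B and f : A → C, such that there is no finite partial order (D,<) of dimension at most n admitting order embeddings g : B → D and h : C → D with g ∘ e = h ∘ f. -/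
/-- A strict partial order `r` on `α` has dimension at most `n` if there are `n` strict
linear orders on `α` whose intersection is `r`. -/
def HasDimLE (n : ℕ) {α : Type} (r : α → α → Prop) : Prop :=
  ∃ L : Fin n → α → α → Prop, (∀ i, IsStrictTotalOrder α (L i)) ∧
    ∀ a b : α, r a b ↔ ∀ i, L i a b

/-- An order embedding between (strict) partial orders: an injection which preserves and
reflects the order. -/
def IsOrdEmbedding {α β : Type} (r : α → α → Prop) (s : β → β → Prop) (f : α → β) : Prop :=
  Function.Injective f ∧ ∀ a b : α, r a b ↔ s (f a) (f b)

/-!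
The standard example `S_k` has minimal points `a_x` and maximal points `b_x` for `k` indices `x`,
with `a_x < b_y` iff `x ≠ y`. Its dimension exceeds `n` when `k > n`, because a linear order
reverses at most one of the pairs `(a_x, b_x)`. Deleting a single maximal point from `S_{n+1}`
leaves an order of dimension at most `n` (for `n ≥ 2`), so `S_{n+1}` minus `b_0` and `S_{n+1}`
minus `b_n` are in the class. They cannot be amalgamated over their intersection, since any amalgam
contains all of `S_{n+1}`.
-/

namespace HasDimLE

variable {α : Type} {r : α → α → Prop}

theorem nonempty_embedding_fin {n : ℕ} (hr : HasDimLE n r) {ι : Type*} {a b : ι → α}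
    (hab : ∀ x y, r (a x) (b y) ↔ x ≠ y) : Nonempty (ι ↪ Fin n) := by
  obtain ⟨L, hL, hrL⟩ := hr
  have exists_reversing : ∀ x, ∃ i, ¬ L i (a x) (b x) := fun x ↦ by
    rw [← not_forall, ← hrL, hab]
    exact not_not.2 rfl
  choose i hi using exists_reversing
  refine ⟨i, fun x y hxy ↦ by_contra fun hne ↦ hi x ?_⟩
  have a_x_lt_b_y : L (i x) (a x) (b y) := (hrL _ _).1 ((hab x y).2 hne) _
  have a_y_lt_b_x : L (i x) (a y) (b x) := (hrL _ _).1 ((hab y x).2 (Ne.symm hne)) _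
  have a_x_lt_a_y : L (i x) (a x) (a y) := trans_trichotomous_right a_x_lt_b_y (hxy ▸ hi y)
  exact _root_.trans a_x_lt_a_y a_y_lt_b_x

theorem of_rankings {κ β : Type*} [Fintype κ] [Nonempty κ] [LinearOrder β]
    (rank : κ → α → β) (rank_lt : ∀ i a b, r a b → rank i a < rank i b)
    (exists_rank_lt : ∀ a b, a ≠ b → ¬ r a b → ∃ i, rank i b < rank i a) :
    HasDimLE (Fintype.card κ) r := by
  classical
  let _ : LinearOrder α := linearOrderOfSTO WellOrderingRel
  -- Ties within each ranking are broken by one fixed linear order on `α`.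
  let key (i : κ) (a : α) : β ×ₗ α := toLex (rank i a, a)
  have key_injective (i : κ) : Function.Injective (key i) := fun a b h ↦ congrArg Prod.snd h
  have key_lt_of_rank_lt {i a b} (h : rank i a < rank i b) : key i a < key i b :=
    Prod.Lex.toLex_lt_toLex.2 (.inl h)
  let index := (Fintype.equivFin κ).symm
  refine ⟨fun j a b ↦ key (index j) a < key (index j) b, fun j ↦
    (RelEmbedding.preimage ⟨_, key_injective (index j)⟩ (· < ·)).isStrictTotalOrder, fun a b ↦ ?_⟩
  suffices r a b ↔ ∀ i, key i a < key i b from this.trans index.surjective.forall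
  refine ⟨fun hab i ↦ key_lt_of_rank_lt (rank_lt i a b hab), fun hkey ↦ ?_⟩
  have hne : a ≠ b := fun h ↦ (hkey (Classical.arbitrary κ)).ne (h ▸ rfl)
  by_contra hab
  obtain ⟨i, hi⟩ := exists_rank_lt a b hne hab
  exact (hkey i).not_gt (key_lt_of_rank_lt hi)

end HasDimLE

/-- The standard example with index set `ι`, keeping only the maximal points indexed by `J`:
`Sum.inl x` is the minimal point `a_x`, `Sum.inr y` the maximal point `b_y`. -/
def StandardExample {ι : Type*} (J : Set ι) : ι ⊕ J → ι ⊕ J → Prop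
  | .inl x, .inr y => x ≠ y
  | _, _ => False

namespace StandardExample

variable {ι : Type*}

theorem isStrictOrder (J : Set ι) : IsStrictOrder (ι ⊕ J) (StandardExample J) where
  irrefl := by rintro (x | x) ⟨⟩
  trans := by rintro (x | x) (y | y) (z | z) hxy hyz <;> simp_all only [StandardExample]

section Ranking

open scoped Classical in
/-- The `i`-th of the rankings realizing a standard example without the maximal point `b_o`:
`a_x` for `x ≠ i, o`, then `a_o`, then `b_i`, then `a_i`, then `b_y` for `y ≠ i`. It reverses
`(a_i, b_i)`, and placing `a_o` above the lowest block separates it from the other `a_x`. -/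
noncomputable def ranking {J : Set ι} (o i : ι) : ι ⊕ J → ℕ
  | .inl x => if x = i then 3 else if x = o then 1 else 0
  | .inr y => if y = i then 2 else 4

variable {J : Set ι} {o i : ι}

theorem ranking_lt (p q : ι ⊕ J) (h : StandardExample J p q) :
    ranking o i p < ranking o i q := by
  match p, q with
  | .inl x, .inr y => grind [ranking, StandardExample]

theorem exists_ranking_lt (exists_third : ∀ x, ∃ i, i ≠ o ∧ i ≠ x) (ho : o ∉ J) (p q : ι ⊕ J)
    (hne : p ≠ q) (h : ¬ StandardExample J p q) :
    ∃ i : {i // i ≠ o}, ranking o i.1 q < ranking o i.1 p := by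
  have ne_o (y : J) : y.1 ≠ o := fun hy ↦ ho (hy ▸ y.2)
  match p, q with
  | .inl x, .inl y =>
    by_cases hx : x = o
    · obtain ⟨i, hio, hiy⟩ := exists_third y
      exact ⟨⟨i, hio⟩, by grind [ranking]⟩
    · exact ⟨⟨x, hx⟩, by grind [ranking]⟩
  | .inl x, .inr y => exact ⟨⟨y, ne_o y⟩, by grind [ranking, StandardExample]⟩
  | .inr x, .inl y =>
    obtain ⟨i, hio, hix⟩ := exists_third x
    exact ⟨⟨i, hio⟩, by grind [ranking]⟩
  | .inr x, .inr y => exact ⟨⟨y, ne_o y⟩, by grind [ranking]⟩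

end Ranking

theorem hasDimLE_card_sub_one {ι : Type} [Fintype ι] (hι : 2 < Fintype.card ι) {J : Set ι} {o : ι}
    (ho : o ∉ J) : HasDimLE (Fintype.card ι - 1) (StandardExample J) := by
  classical
  have exists_third (x : ι) : ∃ i, i ≠ o ∧ i ≠ x := by
    obtain ⟨i, hi⟩ := Finset.exists_mem_notMem_of_card_lt_card
      (Finset.card_le_two.trans_lt hι : ({o, x} : Finset ι).card < Finset.univ.card)
    exact ⟨i, by simpa using hi⟩
  have : Nonempty {i // i ≠ o} := let ⟨i, hi, _⟩ := exists_third o; ⟨i, hi⟩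
  rw [← Set.card_ne_eq o]
  exact .of_rankings (κ := {i // i ≠ o}) (fun i ↦ ranking o i.1) (fun _ ↦ ranking_lt)
    (exists_ranking_lt exists_third ho)

theorem isOrdEmbedding_map_inclusion {ι : Type} {J K : Set ι} (h : J ⊆ K) :
    IsOrdEmbedding (StandardExample J) (StandardExample K) (Sum.map id (Set.inclusion h)) := by
  refine ⟨Function.injective_id.sumMap (Set.inclusion_injective h), ?_⟩
  rintro (x | x) (y | y) <;> rfl

theorem exists_forall_iff_ne_of_amalgam {ι E : Type} {J K : Set ι} (hJK : J ∪ K = Set.univ)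
    {r : E → E → Prop} {g : ι ⊕ J → E} {h : ι ⊕ K → E}
    (hg : IsOrdEmbedding (StandardExample J) r g) (hh : IsOrdEmbedding (StandardExample K) r h)
    (hgh : ∀ x, g (.inl x) = h (.inl x)) :
    ∃ a b : ι → E, ∀ x y, r (a x) (b y) ↔ x ≠ y := by
  have exists_max (y : ι) : ∃ b, ∀ x, r (g (.inl x)) b ↔ x ≠ y := by
    rcases hJK.ge (Set.mem_univ y) with hy | hy
    · exact ⟨g (.inr ⟨y, hy⟩), fun x ↦ (hg.2 _ _).symm⟩
    · exact ⟨h (.inr ⟨y, hy⟩), fun x ↦ hgh x ▸ (hh.2 _ _).symm⟩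
  choose b hb using exists_max
  exact ⟨fun x ↦ g (.inl x), b, fun x y ↦ hb y x⟩

end StandardExample

theorem stmt_1_general (n : ℕ) (hn : 2 ≤ n) :
    ∃ (A B C : Type) (_ : Fintype A) (_ : Fintype B) (_ : Fintype C)
      (rA : A → A → Prop) (rB : B → B → Prop) (rC : C → C → Prop),
      IsStrictOrder A rA ∧ IsStrictOrder B rB ∧ IsStrictOrder C rC ∧
      HasDimLE n rA ∧ HasDimLE n rB ∧ HasDimLE n rC ∧
      ∃ (e : A → B) (f : A → C),
        IsOrdEmbedding rA rB e ∧ IsOrdEmbedding rA rC f ∧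
        ¬ ∃ (E : Type) (rE : E → E → Prop), HasDimLE n rE ∧
            ∃ (g : B → E) (h : C → E),
              IsOrdEmbedding rB rE g ∧ IsOrdEmbedding rC rE h ∧ g ∘ e = h ∘ f := by
  let J : Set (Fin (n + 1)) := {0}ᶜ
  let K : Set (Fin (n + 1)) := {Fin.last n}ᶜ
  have hJK : J ∪ K = Set.univ := by
    have zero_notMem : (0 : Fin (n + 1)) ∉ ({Fin.last n} : Set _) := by
      rw [Set.mem_singleton_iff, Fin.ext_iff, Fin.val_zero, Fin.val_last]
      omega
    rw [← Set.compl_inter, Set.singleton_inter_eq_empty.2 zero_notMem, Set.compl_empty]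
  have dim_le {I : Set (Fin (n + 1))} {o} (ho : o ∉ I) : HasDimLE n (StandardExample I) := by
    simpa using StandardExample.hasDimLE_card_sub_one (by simpa using hn) ho
  refine ⟨_, _, _, Fintype.ofFinite _, Fintype.ofFinite _, Fintype.ofFinite _,
    StandardExample (J ∩ K), StandardExample J, StandardExample K,
    StandardExample.isStrictOrder _, StandardExample.isStrictOrder _,
    StandardExample.isStrictOrder _, dim_le (o := 0) (by simp [J]), dim_le (o := 0) (by simp [J]),
    dim_le (o := Fin.last n) (by simp [K]), _, _,
    StandardExample.isOrdEmbedding_map_inclusion Set.inter_subset_left,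
    StandardExample.isOrdEmbedding_map_inclusion Set.inter_subset_right, ?_⟩
  rintro ⟨E, rE, hE, g, h, hg, hh, hgh⟩
  obtain ⟨a, b, hab⟩ := StandardExample.exists_forall_iff_ne_of_amalgam hJK hg hh
    fun x ↦ congrFun hgh (.inl x)
  obtain ⟨f⟩ := hE.nonempty_embedding_fin hab
  simpa using Fintype.card_le_of_embedding f

/-- For every `n ≥ 2`, the class of finite partial orders of dimension at most
`n` fails the amalgamation property. -/
theorem stmt_1 (n : ℕ) (hn : 2 ≤ n) :
    ∃ (A B C : Type) (_ : Fintype A) (_ : Fintype B) (_ : Fintype C)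
      (rA : A → A → Prop) (rB : B → B → Prop) (rC : C → C → Prop),
      IsStrictOrder A rA ∧ IsStrictOrder B rB ∧ IsStrictOrder C rC ∧
      HasDimLE n rA ∧ HasDimLE n rB ∧ HasDimLE n rC ∧
      ∃ (e : A → B) (f : A → C),
        IsOrdEmbedding rA rB e ∧ IsOrdEmbedding rA rC f ∧
        ¬ ∃ (E : Type) (_ : Fintype E) (rE : E → E → Prop),
            IsStrictOrder E rE ∧ HasDimLE n rE ∧
            ∃ (g : B → E) (h : C → E),
              IsOrdEmbedding rB rE g ∧ IsOrdEmbedding rC rE h ∧ g ∘ e = h ∘ f := by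
  obtain ⟨A, B, C, _, _, _, rA, rB, rC, hA, hB, hC, dA, dB, dC, e, f, he, hf, no_amalgam⟩ :=
    stmt_1_general n hn
  exact ⟨A, B, C, ‹_›, ‹_›, ‹_›, rA, rB, rC, hA, hB, hC, dA, dB, dC, e, f, he, hf,
    fun ⟨E, _, rE, _, hE⟩ ↦ no_amalgam ⟨E, rE, hE⟩⟩
end

section
/- Let n ≥ 2 and let D ⊆ ℚ^n be a Manaster–Remmel set, with < the restriction to D of the product order on ℚ^n. Then (D,<) is not 3-homogeneous: there exist three-element subsets S, T ⊆ D and an order isomorphism f : (S,<) → (T,<) that does not extend to any automorphism of (D,<). In particular, (D,<) is not ultrahomogeneous. -/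
/-- `D ⊆ ℚ^n` is a Manaster–Remmel set: dense in the product topology, and any two
distinct points of `D` differ in every coordinate. -/
def MRSet (n : ℕ) (D : Set (Fin n → ℚ)) : Prop :=
  Dense D ∧ ∀ a ∈ D, ∀ b ∈ D, a ≠ b → ∀ i : Fin n, a i ≠ b i

/-- The product (coordinatewise) strict order on `ℚ^n`. -/
def ProdLt {n : ℕ} (a b : Fin n → ℚ) : Prop :=
  (∀ i, a i ≤ b i) ∧ a ≠ b

/-!
Density provides an antichain `a, b, c` in `D` with `c` coordinatewise below the join of `a` and
`b`, together with a point `x` above `a` and `c` but not above `b`. Every common upper bound of `a`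
and `b` then lies above `c`, whereas `x` is a common upper bound of `a` and `c` that does not lie
above `b`. Hence no automorphism fixes `a` and exchanges `b` with `c`, although this exchange is an
order isomorphism of the antichain.
-/

open Set

theorem prodLt_iff_lt {n : ℕ} {a b : Fin n → ℚ} : ProdLt a b ↔ a < b :=
  (lt_iff_le_and_ne (a := a) (b := b)).symm

section Homogeneity

variable {P : Type*}

/-- `k`-homogeneity of the suborder `D` of `P`: every order isomorphism between `k`-element subsets
of `D` extends to an automorphism of `D`. Maps are total functions on `P`, of which only the values
on the relevant subset matter. For `k = 0` also infinite subsets count, since their `ncard` is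
`0`. -/
def IsHomogeneousOfCard [LT P] (k : ℕ) (D : Set P) : Prop :=
  ∀ S T : Set P, S ⊆ D → T ⊆ D → S.ncard = k → T.ncard = k →
    ∀ f : P → P, BijOn f S T → (∀ a ∈ S, ∀ b ∈ S, a < b ↔ f a < f b) →
      ∃ g : P → P, BijOn g D D ∧ (∀ a ∈ D, ∀ b ∈ D, a < b ↔ g a < g b) ∧ ∀ a ∈ S, g a = f a

/-- `c` lies below every common strict upper bound of `a` and `b` in `D`: the automorphism-invariant
property of `(a, b, c)` used to tell `b` and `c` apart. -/
def IsBelowStrictUpperBounds [LT P] (D : Set P) (a b c : P) : Prop :=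
  ∀ y ∈ D, a < y → b < y → c < y

theorem IsBelowStrictUpperBounds.image [LT P] {D : Set P} {a b c : P} {g : P → P}
    (h : IsBelowStrictUpperBounds D a b c) (ha : a ∈ D) (hb : b ∈ D) (hc : c ∈ D)
    (hg : SurjOn g D D) (hlt : ∀ u ∈ D, ∀ v ∈ D, u < v ↔ g u < g v) :
    IsBelowStrictUpperBounds D (g a) (g b) (g c) := by
  intro z hz haz hbz
  obtain ⟨y, hy, rfl⟩ := hg hz
  exact (hlt c hc y hy).1 (h y hy ((hlt a ha y hy).2 haz) ((hlt b hb y hy).2 hbz))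

theorem isBelowStrictUpperBounds_of_le_sup [SemilatticeSup P] {D : Set P} {a b c : P}
    (hc : c ≤ a ⊔ b) (hbc : ¬ b ≤ c) : IsBelowStrictUpperBounds D a b c := fun _ _ hay hby =>
  lt_of_le_of_ne (hc.trans (sup_le hay.le hby.le)) fun hcy => hbc (hcy ▸ hby.le)

theorem lt_iff_lt_of_isAntichain [Preorder P] {S T : Set P} {f : P → P}
    (hS : IsAntichain (· ≤ ·) S) (hT : IsAntichain (· ≤ ·) T) (hf : MapsTo f S T) :
    ∀ a ∈ S, ∀ b ∈ S, a < b ↔ f a < f b :=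
  fun _ ha _ hb => iff_of_false (hS.not_lt ha hb) (hT.not_lt (hf ha) (hf hb))

theorem bijOn_swap_triple [DecidableEq P] {a b c : P} (hab : a ≠ b) (hac : a ≠ c) :
    BijOn (Equiv.swap b c) {a, b, c} {a, b, c} := by
  have himage : Equiv.swap b c '' {a, b, c} = {a, b, c} := by
    rw [image_insert_eq, image_pair, Equiv.swap_apply_of_ne_of_ne hab hac,
      Equiv.swap_apply_left, Equiv.swap_apply_right, pair_comm c b]
  simpa only [himage] using (Equiv.swap b c).injective.injOn.bijOn_image (s := {a, b, c})

theorem not_isHomogeneousOfCard_three [Preorder P] {D : Set P} {a b c : P}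
    (hD : {a, b, c} ⊆ D) (hac : a ≠ c) (hanti : IsAntichain (· ≤ ·) {a, b, c})
    (hbelow : IsBelowStrictUpperBounds D a b c)
    (hnot : ¬ IsBelowStrictUpperBounds D a c b) : ¬ IsHomogeneousOfCard 3 D := by
  classical
  intro hhom
  have hab : a ≠ b := by
    rintro rfl
    exact hnot fun _ _ hay _ => hay
  have hbc : b ≠ c := by
    rintro rfl
    exact hnot hbelow
  have hcard : ({a, b, c} : Set P).ncard = 3 := ncard_eq_three.2 ⟨a, b, c, hab, hac, hbc, rfl⟩
  have hswap := bijOn_swap_triple hab hac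
  obtain ⟨g, hg, hlt, hext⟩ := hhom _ _ hD hD hcard hcard _ hswap
    (lt_iff_lt_of_isAntichain hanti hanti hswap.mapsTo)
  have hga : g a = a := (hext a (by simp)).trans (Equiv.swap_apply_of_ne_of_ne hab hac)
  have hgb : g b = c := (hext b (by simp)).trans (Equiv.swap_apply_left b c)
  have hgc : g c = b := (hext c (by simp)).trans (Equiv.swap_apply_right b c)
  have himage := hbelow.image (hD (by simp)) (hD (by simp)) (hD (by simp)) hg.surjOn hlt
  rw [hga, hgb, hgc] at himage
  exact hnot himage

end Homogeneity

section Product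

variable {ι : Type*} {α : ι → Type*}

theorem isAntichain_triple_of_lt_of_gt [∀ i, Preorder (α i)] {i j : ι} {a b c : ∀ i, α i}
    (haci : a i < c i) (hcbi : c i < b i) (hbcj : b j < c j) (hcaj : c j < a j) :
    IsAntichain (· ≤ ·) {a, b, c} := by
  have not_le_of_gt {u v : ∀ i, α i} (k : ι) (h : v k < u k) : ¬ u ≤ v := fun huv =>
    (huv k).not_gt h
  rintro u (rfl | rfl | rfl) v (rfl | rfl | rfl) huv
  · exact absurd rfl huv
  · exact not_le_of_gt j (hbcj.trans hcaj)
  · exact not_le_of_gt j hcaj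
  · exact not_le_of_gt i (haci.trans hcbi)
  · exact absurd rfl huv
  · exact not_le_of_gt i hcbi
  · exact not_le_of_gt i haci
  · exact not_le_of_gt j hbcj
  · exact absurd rfl huv

variable [Finite ι] [∀ i, LinearOrder (α i)] [∀ i, DenselyOrdered (α i)]
  [∀ i, TopologicalSpace (α i)] [∀ i, OrderClosedTopology (α i)] {D : Set (∀ i, α i)}

theorem exists_mem_forall_mem_Ioo (hD : Dense D) {lo hi : ∀ i, α i} (h : ∀ i, lo i < hi i) :
    ∃ d ∈ D, ∀ i, d i ∈ Ioo (lo i) (hi i) := by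
  have hopen : IsOpen (univ.pi fun i => Ioo (lo i) (hi i)) :=
    isOpen_set_pi finite_univ fun _ _ => isOpen_Ioo
  have hne : (univ.pi fun i => Ioo (lo i) (hi i)).Nonempty :=
    univ_pi_nonempty_iff.2 fun i => nonempty_Ioo.2 (h i)
  obtain ⟨d, hd, hdD⟩ := hD.inter_open_nonempty _ hopen hne
  exact ⟨d, hdD, fun i => hd i (mem_univ i)⟩

variable [∀ i, Nontrivial (α i)]

theorem exists_forall_mem_and_lt_of_levels_lt (hD : Dense D) {κ : Type*} (level : κ → ι → ℕ) :
    ∃ p : κ → ∀ i, α i, (∀ k, p k ∈ D) ∧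
      ∀ k l i, level k i < level l i → p k i < p l i := by
  -- A point of level `m` at `i` is taken in the `m`-th gap of an increasing sequence in `α i`.
  have chain (i : ι) : Nonempty (ℕ ↪o α i) := Order.embedding_from_countable_to_dense ℕ (α i)
  let t (i : ι) : ℕ ↪o α i := (chain i).some
  have hbox (k : κ) :
      ∃ d ∈ D, ∀ i, d i ∈ Ioo (t i (level k i)) (t i (level k i + 1)) :=
    exists_mem_forall_mem_Ioo hD fun i => (t i).strictMono (Nat.lt_succ_self _)
  choose p hpD hp using hbox
  refine ⟨p, hpD, fun k l i hkl => ?_⟩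
  calc
    p k i < t i (level k i + 1) := (hp k i).2
    _ ≤ t i (level l i) := (t i).monotone hkl
    _ < p l i := (hp l i).1

theorem exists_crossing_points (hD : Dense D) (i : ι) :
    ∃ a ∈ D, ∃ b ∈ D, ∃ c ∈ D, ∃ x ∈ D, StrongLT a x ∧ StrongLT c x ∧
      (a i < c i ∧ c i < b i ∧ x i < b i) ∧ ∀ j ≠ i, b j < c j ∧ c j < a j := by
  classical
  -- The four points are ordered as `a < c < x < b` at `i` and as `b < c < a < x` elsewhere.
  let level (k : Fin 4) (j : ι) : ℕ := if j = i then ![0, 3, 1, 2] k else ![2, 0, 1, 3] k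
  obtain ⟨p, hpD, hp⟩ := exists_forall_mem_and_lt_of_levels_lt hD level
  refine ⟨p 0, hpD 0, p 1, hpD 1, p 2, hpD 2, p 3, hpD 3, fun j => ?_, fun j => ?_,
    ⟨?_, ?_, ?_⟩, fun j hj => ⟨?_, ?_⟩⟩
  all_goals
    apply hp
    dsimp only [level]
    split_ifs <;> first | contradiction | simp

theorem stmt_2_general [Nontrivial ι] (hD : Dense D) : ¬ IsHomogeneousOfCard 3 D := by
  obtain ⟨i, j, hij⟩ := exists_pair_ne ι
  obtain ⟨a, ha, b, hb, c, hc, x, hx, hax, hcx, ⟨haci, hcbi, hxbi⟩, hother⟩ :=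
    exists_crossing_points hD i
  obtain ⟨hbcj, hcaj⟩ := hother j hij.symm
  have hsub : {a, b, c} ⊆ D := by rintro _ (rfl | rfl | rfl) <;> assumption
  have hac : a ≠ c := ne_of_apply_ne (· i) haci.ne
  have hc_le : c ≤ a ⊔ b := fun k => by
    rcases eq_or_ne k i with rfl | hk
    · exact le_sup_of_le_right hcbi.le
    · exact le_sup_of_le_left (hother k hk).2.le
  have hbc : ¬ b ≤ c := fun h => (h i).not_gt hcbi
  have hbx : ¬ b < x := fun h => (h.le i).not_gt hxbi
  exact not_isHomogeneousOfCard_three hsub hac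
    (isAntichain_triple_of_lt_of_gt haci hcbi hbcj hcaj)
    (isBelowStrictUpperBounds_of_le_sup hc_le hbc)
    fun h => hbx (h x hx (lt_of_strongLT hax) (lt_of_strongLT hcx))

end Product

/-- `(D,<)` is not 3-homogeneous: there are three-element subsets `S, T ⊆ D`
and an order isomorphism `f : (S,<) → (T,<)` that does not extend to any automorphism of
`(D,<)`. -/
theorem stmt_2 (n : ℕ) (hn : 2 ≤ n) (D : Set (Fin n → ℚ)) (hD : MRSet n D) :
    ∃ S T : Set (Fin n → ℚ), S ⊆ D ∧ T ⊆ D ∧ S.ncard = 3 ∧ T.ncard = 3 ∧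
      ∃ f : (Fin n → ℚ) → (Fin n → ℚ), Set.BijOn f S T ∧
        (∀ a ∈ S, ∀ b ∈ S, ProdLt a b ↔ ProdLt (f a) (f b)) ∧
        ¬ ∃ g : (Fin n → ℚ) → (Fin n → ℚ), Set.BijOn g D D ∧
            (∀ a ∈ D, ∀ b ∈ D, (ProdLt a b ↔ ProdLt (g a) (g b))) ∧
            ∀ a ∈ S, g a = f a := by
  have : Nontrivial (Fin n) := Fin.nontrivial_iff_two_le.2 hn
  simpa [IsHomogeneousOfCard, prodLt_iff_lt] using stmt_2_general hD.1
end

section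
/- Let n ≥ 2 and let D ⊆ ℚ^n be a Manaster–Remmel set with coordinate orders <_1,...,<_n. Let Q be a finite set equipped with n linear orders <_1,...,<_n, let P ⊆ Q carry the induced orders, and let f : P → D be an injection with p <_i q iff f(p) <_i f(q) for all i ≤ n and p, q ∈ P. Then f extends to an injection g : Q → D with p <_i q iff g(p) <_i g(q) for all i ≤ n and p, q ∈ Q. -/
/-!
Add the points of `Q \ P` one at a time. In each coordinate, the finitely many values already
chosen split into those that must lie below and those that must lie above the value at the new
point, and transitivity of the orders makes the room between them a nonempty open set. The product
of these sets over the coordinates is open and nonempty, so it meets the dense set `D`.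
Preservation of the orders is all that has to be carried through the induction: as the orders on
`Q` are total, it already implies reflection and injectivity.
-/

/-- `h` maps the relation `r`, restricted to `S`, into the strict order of `α`. This is
`StrictMonoOn` for an unbundled relation, as needed when `Q` carries several orders at once. -/
def RelStrictMonoOn {Q α : Type*} [LT α] (r : Q → Q → Prop) (h : Q → α) (S : Set Q) : Prop :=
  ∀ p ∈ S, ∀ q ∈ S, r p q → h p < h q

/-- The values that a map already given by `h` on `S` may take at `x` if it is to preserve `r`
on `insert x S`. -/
def relCut {Q α : Type*} [LT α] (r : Q → Q → Prop) (h : Q → α) (S : Set Q) (x : Q) : Set α :=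
  {m | (∀ p ∈ S, r p x → h p < m) ∧ ∀ p ∈ S, r x p → m < h p}

section OneOrder

variable {Q α : Type*} {r : Q → Q → Prop} {h h' : Q → α} {S : Set Q} {x : Q}

theorem RelStrictMonoOn.insert_of_mem_relCut [LT α] [Std.Irrefl r] (hh : RelStrictMonoOn r h S)
    (heq : Set.EqOn h' h S) (hx : h' x ∈ relCut r h S x) :
    RelStrictMonoOn r h' (insert x S) := by
  rintro p (rfl | hp) q (rfl | hq) hpq
  · exact absurd hpq (irrefl _)
  · rw [heq hq]
    exact hx.2 q hq hpq
  · rw [heq hp]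
    exact hx.1 p hp hpq
  · rw [heq hp, heq hq]
    exact hh p hp q hq hpq

variable [LinearOrder α]

theorem RelStrictMonoOn.relCut_nonempty [DenselyOrdered α] [NoMinOrder α] [NoMaxOrder α]
    [Nonempty α] [IsTrans Q r] (hh : RelStrictMonoOn r h S) (hS : S.Finite) (x : Q) :
    (relCut r h S x).Nonempty := by
  classical
  lift S to Finset Q using hS
  have below_lt_above : ∀ a ∈ {p ∈ S | r p x}.image h, ∀ b ∈ {p ∈ S | r x p}.image h, a < b := by
    simp only [Finset.forall_mem_image, Finset.mem_filter]
    exact fun p ⟨hp, hpx⟩ q ⟨hq, hxq⟩ ↦ hh p hp q hq (_root_.trans hpx hxq)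
  obtain ⟨m, below_lt, lt_above⟩ := Order.exists_between_finsets _ _ below_lt_above
  simp only [Finset.forall_mem_image, Finset.mem_filter, and_imp] at below_lt lt_above
  exact ⟨m, below_lt, lt_above⟩

theorem isOpen_relCut [TopologicalSpace α] [OrderClosedTopology α] (hS : S.Finite) :
    IsOpen (relCut r h S x) := by
  have relCut_eq : relCut r h S x =
      (⋂ p ∈ {p ∈ S | r p x}, Set.Ioi (h p)) ∩ ⋂ p ∈ {p ∈ S | r x p}, Set.Iio (h p) := by
    ext m
    simp [relCut]
  rw [relCut_eq]
  exact ((hS.sep _).isOpen_biInter fun _ _ ↦ isOpen_Ioi).inter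
    ((hS.sep _).isOpen_biInter fun _ _ ↦ isOpen_Iio)

end OneOrder

section SeveralOrders

variable {ι Q : Type*} [Finite ι] {X : ι → Type*} [∀ i, LinearOrder (X i)]
  [∀ i, DenselyOrdered (X i)] [∀ i, NoMinOrder (X i)] [∀ i, NoMaxOrder (X i)]
  [∀ i, Nonempty (X i)] [∀ i, TopologicalSpace (X i)] [∀ i, OrderClosedTopology (X i)]
  {D : Set (∀ i, X i)} {L : ι → Q → Q → Prop}

theorem exists_mem_forall_mem_relCut [∀ i, IsTrans Q (L i)] (hD : Dense D) {S : Set Q}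
    (hS : S.Finite) {g : Q → ∀ i, X i} (hg : ∀ i, RelStrictMonoOn (L i) (g · i) S) (x : Q) :
    ∃ v ∈ D, ∀ i, v i ∈ relCut (L i) (g · i) S x := by
  have isOpen_box : IsOpen (Set.univ.pi fun i ↦ relCut (L i) (g · i) S x) :=
    isOpen_set_pi Set.finite_univ fun _ _ ↦ isOpen_relCut hS
  have box_nonempty : (Set.univ.pi fun i ↦ relCut (L i) (g · i) S x).Nonempty :=
    Set.univ_pi_nonempty_iff.2 fun i ↦ (hg i).relCut_nonempty hS x
  obtain ⟨v, hvD, hv⟩ := hD.exists_mem_open isOpen_box box_nonempty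
  exact ⟨v, hvD, fun i ↦ hv i (Set.mem_univ i)⟩

theorem exists_relStrictMonoOn_univ_extension [Finite Q] [∀ i, IsStrictOrder Q (L i)]
    (hD : Dense D) {P : Set Q} {f : Q → ∀ i, X i} (hfD : Set.MapsTo f P D)
    (hf : ∀ i, RelStrictMonoOn (L i) (f · i) P) :
    ∃ g : Q → ∀ i, X i, Set.EqOn g f P ∧ Set.MapsTo g Set.univ D ∧
      ∀ i, RelStrictMonoOn (L i) (g · i) Set.univ := by
  classical
  refine Set.Finite.induction_to_univ
    (C := fun S ↦ P ⊆ S ∧ ∃ g : Q → ∀ i, X i, Set.EqOn g f P ∧ Set.MapsTo g S D ∧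
      ∀ i, RelStrictMonoOn (L i) (g · i) S)
    P ⟨subset_rfl, f, Set.eqOn_refl f P, hfD, hf⟩ ?_ |>.2
  rintro S hS ⟨hPS, g, hgf, hgD, hg⟩
  obtain ⟨x, hxS⟩ := (Set.ne_univ_iff_exists_notMem S).1 hS
  obtain ⟨v, hvD, hv⟩ := exists_mem_forall_mem_relCut hD S.toFinite hg x
  have update_eqOn : Set.EqOn (Function.update g x v) g S := fun p hp ↦
    Function.update_of_ne (ne_of_mem_of_not_mem hp hxS) v g
  refine ⟨x, hxS, hPS.trans (Set.subset_insert x S), Function.update g x v,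
    (update_eqOn.mono hPS).trans hgf, ?_, fun i ↦ ?_⟩
  · exact Set.forall_mem_insert.2 ⟨by simpa using hvD, hgD.congr update_eqOn.symm⟩
  · exact (hg i).insert_of_mem_relCut (fun p hp ↦ congrFun (update_eqOn hp) i)
      (by simpa using hv i)

theorem stmt_3_general [Nonempty ι] [Finite Q] [∀ i, IsStrictTotalOrder Q (L i)] (hD : Dense D)
    {P : Set Q} {f : Q → ∀ i, X i} (hfD : ∀ p ∈ P, f p ∈ D)
    (hf : ∀ i, ∀ p ∈ P, ∀ q ∈ P, L i p q → f p i < f q i) :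
    ∃ g : Q → ∀ i, X i, (∀ q, g q ∈ D) ∧ Function.Injective g ∧ (∀ p ∈ P, g p = f p) ∧
      ∀ i, ∀ p q : Q, L i p q ↔ g p i < g q i := by
  obtain ⟨g, hgf, hgD, hg⟩ := exists_relStrictMonoOn_univ_extension hD hfD hf
  let coordinateEmbedding (i : ι) : L i ↪r ((· < ·) : X i → X i → Prop) :=
    RelEmbedding.ofMonotone (g · i) fun p q ↦ hg i p trivial q trivial
  have injective_g : Function.Injective g := by
    obtain ⟨i⟩ := ‹Nonempty ι›
    exact fun p q hpq ↦ (coordinateEmbedding i).injective (congrFun hpq i)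
  exact ⟨g, fun q ↦ hgD trivial, injective_g, hgf,
    fun i _ _ ↦ (coordinateEmbedding i).map_rel_iff.symm⟩

end SeveralOrders

/-- an embedding (with respect to the `n` linear orders) of a subset `P` of a
finite set `Q` carrying `n` linear orders into a Manaster–Remmel set `D` with its `n`
coordinate orders extends to an embedding of all of `Q` into `D`. -/
theorem stmt_3 (n : ℕ) (hn : 2 ≤ n) (D : Set (Fin n → ℚ)) (hD : MRSet n D)
    (Q : Type) [Fintype Q] (L : Fin n → Q → Q → Prop)
    (hL : ∀ i, IsStrictTotalOrder Q (L i))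
    (P : Set Q) (f : Q → (Fin n → ℚ))
    (hfD : ∀ p ∈ P, f p ∈ D)
    (hfinj : Set.InjOn f P)
    (hf : ∀ i : Fin n, ∀ p ∈ P, ∀ q ∈ P, L i p q ↔ f p i < f q i) :
    ∃ g : Q → (Fin n → ℚ), (∀ q, g q ∈ D) ∧ Function.Injective g ∧
      (∀ p ∈ P, g p = f p) ∧
      ∀ i : Fin n, ∀ p q : Q, L i p q ↔ g p i < g q i := by
  have : NeZero n := ⟨by lia⟩
  exact stmt_3_general hD.1 hfD fun i p hp q hq ↦ (hf i p hp q hq).1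
end

section
/- Let n ≥ 2 and let D ⊆ ℚ^n be a Manaster–Remmel set with coordinate orders <_1,...,<_n. Then the structure (D, <_1,...,<_n) is ultrahomogeneous: for any finite subsets P, Q ⊆ D and any bijection f : P → Q with p <_i q iff f(p) <_i f(q) for all i ≤ n and p, q ∈ P, there exists a bijection g : D → D with a <_i b iff g(a) <_i g(b) for all i ≤ n and a, b ∈ D, such that g extends f. -/
/-!
Back and forth between two countable dense sets `D` and `E`, in each of which distinct points differ
in every coordinate. Let `s` be a finite partial isomorphism from `D` to `E` and let `a ∈ D` be
outside the domain of `s`. In each coordinate `i`, Cantor's argument provides a value `m i` lying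
relative to the second components of `s` as `a i` lies relative to the first ones. As `a` differs
from the points of the domain in every coordinate, these relations are strict inequalities, so they
persist in a neighbourhood of `m`, which meets `E` by density. Since `D` and `E` are countable, all
their points can be treated in turn, and the union of the resulting chain is an isomorphism.
-/

open Set Filter Topology

theorem cmp_eq_cmp_of_lt_iff_lt {α β : Type*} [LinearOrder α] [LinearOrder β] {a b : α} {c d : β}
    (hlt : a < b ↔ c < d) (hgt : b < a ↔ d < c) : cmp a b = cmp c d := by
  simp only [cmp, cmpUsing, hlt, hgt]

theorem eventually_cmp_eq {α : Type*} [LinearOrder α] [TopologicalSpace α] [OrderClosedTopology α]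
    {c m : α} (hcm : c ≠ m) : ∀ᶠ x in 𝓝 m, cmp c x = cmp c m := by
  rcases hcm.lt_or_gt with hlt | hgt
  · filter_upwards [Ioi_mem_nhds hlt] with x hx
    exact hx.cmp_eq_lt.trans hlt.cmp_eq_lt.symm
  · filter_upwards [Iio_mem_nhds hgt] with x hx
    exact hx.cmp_eq_gt.trans hgt.cmp_eq_gt.symm

section CoordinateOrders

variable {ι : Type*} {α β : ι → Type*} [∀ i, LinearOrder (α i)] [∀ i, LinearOrder (β i)]
  {D : Set (∀ i, α i)} {E : Set (∀ i, β i)} {G s : Set ((∀ i, α i) × (∀ i, β i))}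
  {a : ∀ i, α i} {b : ∀ i, β i}

/-- `G` is a partial isomorphism from `D` to `E` for the coordinate orders, given by its graph.
Comparing with `cmp` makes `G` automatically single-valued and injective. -/
structure IsCoordPartialIso (D : Set (∀ i, α i)) (E : Set (∀ i, β i))
    (G : Set ((∀ i, α i) × (∀ i, β i))) : Prop where
  subset_prod : G ⊆ D ×ˢ E
  cmp_eq : ∀ p ∈ G, ∀ q ∈ G, ∀ i, cmp (p.1 i) (q.1 i) = cmp (p.2 i) (q.2 i)

namespace IsCoordPartialIso

theorem swap (hG : IsCoordPartialIso D E G) : IsCoordPartialIso E D (Prod.swap ⁻¹' G) where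
  subset_prod _ hp := (hG.subset_prod hp).symm
  cmp_eq p hp q hq i := (hG.cmp_eq p.swap hp q.swap hq i).symm

theorem insert (hG : IsCoordPartialIso D E G) (ha : a ∈ D) (hb : b ∈ E)
    (hab : ∀ p ∈ G, ∀ i, cmp (p.1 i) (a i) = cmp (p.2 i) (b i)) :
    IsCoordPartialIso D E (insert (a, b) G) where
  subset_prod := insert_subset ⟨ha, hb⟩ hG.subset_prod
  cmp_eq := by
    rintro p (rfl | hp) q (rfl | hq) i
    · simp only [cmp_self_eq_eq]
    · exact cmp_eq_cmp_symm.1 (hab q hq i)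
    · exact hab p hp i
    · exact hG.cmp_eq p hp q hq i

theorem sUnion {𝒢 : Set (Set ((∀ i, α i) × (∀ i, β i)))} (hdir : DirectedOn (· ⊆ ·) 𝒢)
    (h𝒢 : ∀ G ∈ 𝒢, IsCoordPartialIso D E G) : IsCoordPartialIso D E (⋃₀ 𝒢) where
  subset_prod := sUnion_subset fun G hG => (h𝒢 G hG).subset_prod
  cmp_eq := by
    rintro p ⟨G, hG, hp⟩ q ⟨H, hH, hq⟩
    obtain ⟨K, hK, hGK, hHK⟩ := hdir G hG H hH
    exact (h𝒢 K hK).cmp_eq p (hGK hp) q (hHK hq)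

theorem fst_eq_iff_snd_eq (hG : IsCoordPartialIso D E G) {p q : (∀ i, α i) × (∀ i, β i)}
    (hp : p ∈ G) (hq : q ∈ G) : p.1 = q.1 ↔ p.2 = q.2 := by
  simp only [funext_iff, eq_iff_eq_of_cmp_eq_cmp (hG.cmp_eq p hp q hq _)]

theorem graphOn {P : Set (∀ i, α i)} {f : (∀ i, α i) → ∀ i, β i} (hP : P ⊆ D)
    (hmaps : MapsTo f P E) (hf : ∀ i, ∀ a ∈ P, ∀ b ∈ P, a i < b i ↔ f a i < f b i) :
    IsCoordPartialIso D E (P.graphOn f) where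
  subset_prod := by
    rintro _ ⟨a, ha, rfl⟩
    exact ⟨hP ha, hmaps ha⟩
  cmp_eq := by
    rintro _ ⟨a, ha, rfl⟩ _ ⟨b, hb, rfl⟩ i
    exact cmp_eq_cmp_of_lt_iff_lt (hf i a ha b hb) (hf i b hb a ha)

theorem exists_bijOn [Nonempty (∀ i, β i)] (hG : IsCoordPartialIso D E G)
    (hleft : ∀ a ∈ D, ∃ b, (a, b) ∈ G) (hright : ∀ b ∈ E, ∃ a, (a, b) ∈ G) :
    ∃ g : (∀ i, α i) → ∀ i, β i, BijOn g D E ∧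
      (∀ i, ∀ a ∈ D, ∀ b ∈ D, a i < b i ↔ g a i < g b i) ∧ ∀ p ∈ G, g p.1 = p.2 := by
  choose! g hgG using hleft
  have hg : ∀ p ∈ G, g p.1 = p.2 := fun p hp =>
    (hG.fst_eq_iff_snd_eq (hgG p.1 (hG.subset_prod hp).1) hp).1 rfl
  have hinj : InjOn g D := fun a ha b hb => (hG.fst_eq_iff_snd_eq (hgG a ha) (hgG b hb)).2
  have hsurj : SurjOn g D E := fun b hb =>
    let ⟨a, hab⟩ := hright b hb
    ⟨a, (hG.subset_prod hab).1, hg _ hab⟩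
  exact ⟨g, ⟨fun a ha => (hG.subset_prod (hgG a ha)).2, hinj, hsurj⟩, fun i a ha b hb =>
    lt_iff_lt_of_cmp_eq_cmp (hG.cmp_eq _ (hgG a ha) _ (hgG b hb) i), hg⟩

section Extension

variable [∀ i, DenselyOrdered (β i)] [∀ i, NoMinOrder (β i)] [∀ i, NoMaxOrder (β i)]
  [∀ i, Nonempty (β i)]

theorem exists_forall_cmp_eq (hs : IsCoordPartialIso D E s) (hfin : s.Finite) (a : ∀ i, α i) :
    ∃ m : ∀ i, β i, ∀ p ∈ s, ∀ i, cmp (p.1 i) (a i) = cmp (p.2 i) (m i) := by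
  classical
  have hcoord (i : ι) : ∃ y : β i, ∀ p ∈ s, cmp (p.1 i) (a i) = cmp (p.2 i) y := by
    let sᵢ : Order.PartialIso (α i) (β i) :=
      ⟨hfin.toFinset.image fun p => (p.1 i, p.2 i), by
        simp only [Finset.forall_mem_image, Finite.mem_toFinset]
        exact fun p hp q hq => hs.cmp_eq p hp q hq i⟩
    obtain ⟨y, hy⟩ := sᵢ.exists_across (a i)
    exact ⟨y, fun p hp => hy _ (Finset.mem_image_of_mem _ (hfin.mem_toFinset.2 hp))⟩
  choose m hm using hcoord
  exact ⟨m, fun p hp i => hm i p hp⟩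

theorem exists_mem_forall_cmp_eq [Finite ι] [∀ i, TopologicalSpace (β i)]
    [∀ i, OrderClosedTopology (β i)] (hs : IsCoordPartialIso D E s) (hfin : s.Finite)
    (hinj : ∀ i, InjOn (Function.eval i) D) (hE : Dense E) (ha : a ∈ D) :
    ∃ b ∈ E, ∀ p ∈ s, ∀ i, cmp (p.1 i) (a i) = cmp (p.2 i) (b i) := by
  by_cases hdom : ∃ b, (a, b) ∈ s
  · obtain ⟨b, hab⟩ := hdom
    exact ⟨b, (hs.subset_prod hab).2, fun p hp => hs.cmp_eq p hp _ hab⟩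
  obtain ⟨m, hm⟩ := hs.exists_forall_cmp_eq hfin a
  have hne : ∀ p ∈ s, ∀ i, p.2 i ≠ m i := fun p hp i hpm =>
    have hpa : p.1 = a := hinj i (hs.subset_prod hp).1 ha
      ((eq_iff_eq_of_cmp_eq_cmp (hm p hp i)).2 hpm)
    hdom ⟨p.2, hpa ▸ hp⟩
  have hnear : ∀ᶠ x in 𝓝 m, ∀ p ∈ s, ∀ i, cmp (p.2 i) (x i) = cmp (p.2 i) (m i) :=
    (eventually_all_finite hfin).2 fun p hp => eventually_all.2 fun i =>
      (continuous_apply i).continuousAt.eventually (eventually_cmp_eq (hne p hp i))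
  obtain ⟨b, hb, hbE⟩ := (hnear.and_frequently (mem_closure_iff_frequently.1 (hE m))).exists
  exact ⟨b, hbE, fun p hp i => (hm p hp i).trans (hb p hp i).symm⟩

end Extension

end IsCoordPartialIso

/-- The finite partial isomorphisms from `D` to `E`, ordered by inclusion of their graphs: the
approximations in the back-and-forth construction. -/
abbrev FiniteCoordPartialIso (D : Set (∀ i, α i)) (E : Set (∀ i, β i)) : Type _ :=
  {s : Set ((∀ i, α i) × (∀ i, β i)) // s.Finite ∧ IsCoordPartialIso D E s}

namespace FiniteCoordPartialIso

theorem isCofinal_setOf_mem_domain [Finite ι] [∀ i, DenselyOrdered (β i)] [∀ i, NoMinOrder (β i)]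
    [∀ i, NoMaxOrder (β i)] [∀ i, Nonempty (β i)] [∀ i, TopologicalSpace (β i)]
    [∀ i, OrderClosedTopology (β i)] (hinj : ∀ i, InjOn (Function.eval i) D) (hE : Dense E)
    (ha : a ∈ D) : IsCofinal {s : FiniteCoordPartialIso D E | ∃ b, (a, b) ∈ s.1} := by
  rintro ⟨s, hfin, hs⟩
  obtain ⟨b, hb, hab⟩ := hs.exists_mem_forall_cmp_eq hfin hinj hE ha
  exact ⟨⟨insert (a, b) s, hfin.insert _, hs.insert ha hb hab⟩, ⟨b, mem_insert _ _⟩,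
    subset_insert _ _⟩

theorem isCofinal_setOf_mem_range [Finite ι] [∀ i, DenselyOrdered (α i)] [∀ i, NoMinOrder (α i)]
    [∀ i, NoMaxOrder (α i)] [∀ i, Nonempty (α i)] [∀ i, TopologicalSpace (α i)]
    [∀ i, OrderClosedTopology (α i)] (hinj : ∀ i, InjOn (Function.eval i) E) (hD : Dense D)
    (hb : b ∈ E) : IsCofinal {s : FiniteCoordPartialIso D E | ∃ a, (a, b) ∈ s.1} := by
  rintro ⟨s, hfin, hs⟩
  obtain ⟨a, ha, hba⟩ := hs.swap.exists_mem_forall_cmp_eq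
    (hfin.preimage Prod.swap_injective.injOn) hinj hD hb
  have hab : ∀ p ∈ s, ∀ i, cmp (p.1 i) (a i) = cmp (p.2 i) (b i) :=
    fun p hp i => (hba p.swap hp i).symm
  exact ⟨⟨insert (a, b) s, hfin.insert _, hs.insert ha hb hab⟩, ⟨a, mem_insert _ _⟩,
    subset_insert _ _⟩

theorem exists_total_extension (hDc : D.Countable) (hEc : E.Countable)
    (hdomain : ∀ a ∈ D, IsCofinal {s : FiniteCoordPartialIso D E | ∃ b, (a, b) ∈ s.1})
    (hrange : ∀ b ∈ E, IsCofinal {s : FiniteCoordPartialIso D E | ∃ a, (a, b) ∈ s.1})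
    (s : FiniteCoordPartialIso D E) :
    ∃ G, s.1 ⊆ G ∧ IsCoordPartialIso D E G ∧ (∀ a ∈ D, ∃ b, (a, b) ∈ G) ∧
      ∀ b ∈ E, ∃ a, (a, b) ∈ G := by
  have := hDc.toEncodable
  have := hEc.toEncodable
  let requirement : D ⊕ E → Order.Cofinal (FiniteCoordPartialIso D E) :=
    Sum.elim (fun a => ⟨_, hdomain a a.2⟩) (fun b => ⟨_, hrange b b.2⟩)
  let I := Order.idealOfCofinals s requirement
  have hmeets := Order.cofinal_meets_idealOfCofinals s requirement
  refine ⟨⋃₀ (Subtype.val '' (I : Set (FiniteCoordPartialIso D E))),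
    subset_sUnion_of_mem (mem_image_of_mem _ (Order.mem_idealOfCofinals s requirement)),
    .sUnion (directedOn_image.2 I.directed) (forall_mem_image.2 fun t _ => t.2.2),
    fun a ha => ?_, fun b hb => ?_⟩
  · obtain ⟨t, ⟨b, hab⟩, ht⟩ := hmeets (.inl ⟨a, ha⟩)
    exact ⟨b, t, mem_image_of_mem _ ht, hab⟩
  · obtain ⟨t, ⟨a, hab⟩, ht⟩ := hmeets (.inr ⟨b, hb⟩)
    exact ⟨a, t, mem_image_of_mem _ ht, hab⟩

end FiniteCoordPartialIso

theorem stmt_4_general [Finite ι]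
    [∀ i, DenselyOrdered (α i)] [∀ i, NoMinOrder (α i)] [∀ i, NoMaxOrder (α i)]
    [∀ i, Nonempty (α i)] [∀ i, TopologicalSpace (α i)] [∀ i, OrderClosedTopology (α i)]
    [∀ i, DenselyOrdered (β i)] [∀ i, NoMinOrder (β i)] [∀ i, NoMaxOrder (β i)]
    [∀ i, Nonempty (β i)] [∀ i, TopologicalSpace (β i)] [∀ i, OrderClosedTopology (β i)]
    (hDc : D.Countable) (hD : Dense D) (hDinj : ∀ i, InjOn (Function.eval i) D)
    (hEc : E.Countable) (hE : Dense E) (hEinj : ∀ i, InjOn (Function.eval i) E)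
    {P : Set (∀ i, α i)} (hP : P ⊆ D) (hPfin : P.Finite) {f : (∀ i, α i) → ∀ i, β i}
    (hmaps : MapsTo f P E) (hf : ∀ i, ∀ a ∈ P, ∀ b ∈ P, a i < b i ↔ f a i < f b i) :
    ∃ g : (∀ i, α i) → ∀ i, β i, BijOn g D E ∧
      (∀ i, ∀ a ∈ D, ∀ b ∈ D, a i < b i ↔ g a i < g b i) ∧ EqOn g f P := by
  obtain ⟨G, hfG, hG, hleft, hright⟩ := FiniteCoordPartialIso.exists_total_extension hDc hEc
    (fun _ => FiniteCoordPartialIso.isCofinal_setOf_mem_domain hDinj hE)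
    (fun _ => FiniteCoordPartialIso.isCofinal_setOf_mem_range hEinj hD)
    ⟨P.graphOn f, hPfin.image _, .graphOn hP hmaps hf⟩
  obtain ⟨g, hbij, hlt, hg⟩ := hG.exists_bijOn hleft hright
  exact ⟨g, hbij, hlt, fun a ha => hg _ (hfG (mem_image_of_mem _ ha))⟩

end CoordinateOrders

theorem MRSet.injOn_eval {n : ℕ} {D : Set (Fin n → ℚ)} (hD : MRSet n D) (i : Fin n) :
    InjOn (Function.eval i) D :=
  fun a ha b hb hab => by_contra fun hne => hD.2 a ha b hb hne i hab

/-- `(D, <_1, …, <_n)` is ultrahomogeneous: any isomorphism (with respect to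
the `n` coordinate orders) between finite subsets of `D` extends to an automorphism
of `(D, <_1, …, <_n)`. -/
theorem stmt_4 (n : ℕ) (hn : 2 ≤ n) (D : Set (Fin n → ℚ)) (hD : MRSet n D)
    (P Q : Set (Fin n → ℚ)) (hP : P ⊆ D) (hQ : Q ⊆ D)
    (hPfin : P.Finite) (hQfin : Q.Finite)
    (f : (Fin n → ℚ) → (Fin n → ℚ)) (hbij : Set.BijOn f P Q)
    (hf : ∀ i : Fin n, ∀ a ∈ P, ∀ b ∈ P, a i < b i ↔ f a i < f b i) :
    ∃ g : (Fin n → ℚ) → (Fin n → ℚ), Set.BijOn g D D ∧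
      (∀ i : Fin n, ∀ a ∈ D, ∀ b ∈ D, a i < b i ↔ g a i < g b i) ∧
      ∀ a ∈ P, g a = f a := by
  exact stmt_4_general D.to_countable hD.1 hD.injOn_eval D.to_countable hD.1 hD.injOn_eval
    hP hPfin (hbij.mapsTo.mono_right hQ) hf
end

section
/- Fix n ≥ 2. Let X be a set equipped with n linear orders <_1,...,<_n satisfying the region-density property. Let Q be a finite set equipped with n linear orders <_1,...,<_n, let P ⊆ Q carry the induced orders, and let f : P → X be an injection with p <_i q iff f(p) <_i f(q) for all i ≤ n and p, q ∈ P. Then f extends to an injection g : Q → X with p <_i q iff g(p) <_i g(q) for all i ≤ n and p, q ∈ Q. -/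
/-- A set `X` with `n` linear orders `L 1, …, L n` satisfies the region-density property:
for all partial specifications `lo, hi : Fin n → Option X` of lower and upper bounds which
are consistent (whenever both a lower bound `a` and an upper bound `b` are specified in the
`i`-th order, `a <_i b`), there is a point of `X` lying strictly between all the specified
bounds, in each order. -/
def RegionDense (n : ℕ) {X : Type} (L : Fin n → X → X → Prop) : Prop :=
  ∀ lo hi : Fin n → Option X,
    (∀ i : Fin n, ∀ a b : X, lo i = some a → hi i = some b → L i a b) →
    ∃ d : X, ∀ i : Fin n,
      (∀ a : X, lo i = some a → L i a d) ∧ (∀ b : X, hi i = some b → L i d b)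

/-!
Only strict monotonicity in each order has to be extended: a strictly monotone map out of a total
order is automatically injective and reflects the order. To add a point `x` to a finite domain `S`,
the images of the points of `S` below and above `x` form, in each order, two finite chains, one
below the other. Region density applied to the top of the first and the bottom of the second
yields a value for `x`.
-/

section FiniteChains

variable {α : Type*} {r : α → α → Prop} [IsStrictOrder α r] {s : Set α}

theorem exists_least_of_isChain_of_finite (hchain : IsChain r s) (hfin : s.Finite)
    (hne : s.Nonempty) : ∃ a ∈ s, ∀ x ∈ s, x ≠ a → r a x := by
  obtain ⟨a, has, hmin⟩ := (Set.wellFoundedOn_iff.1 (hfin.wellFoundedOn (r := r))).has_min s hne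
  exact ⟨a, has, fun x hx hxa =>
    (hchain has hx hxa.symm).resolve_right fun hlt => hmin x hx ⟨hlt, hx, has⟩⟩

theorem exists_option_forall_rel_of_isChain_of_finite (hchain : IsChain r s) (hfin : s.Finite) :
    ∃ o : Option α, (∀ a, o = some a → a ∈ s) ∧
      ∀ d, (∀ a, o = some a → r d a) → ∀ x ∈ s, r d x := by
  rcases s.eq_empty_or_nonempty with rfl | hne
  · exact ⟨none, by simp⟩
  · obtain ⟨a, has, hleast⟩ := exists_least_of_isChain_of_finite hchain hfin hne
    refine ⟨some a, fun _ h => Option.some.inj h ▸ has, fun d hd x hx => ?_⟩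
    have hda : r d a := hd a rfl
    by_cases hxa : x = a
    · exact hxa ▸ hda
    · exact _root_.trans hda (hleast x hx hxa)

end FiniteChains

theorem RegionDense.exists_between_finite_chains {n : ℕ} {X : Type} {L : Fin n → X → X → Prop}
    [∀ i, IsStrictOrder X (L i)] (hdense : RegionDense n L) {A B : Fin n → Set X}
    (hAchain : ∀ i, IsChain (L i) (A i)) (hAfin : ∀ i, (A i).Finite)
    (hBchain : ∀ i, IsChain (L i) (B i)) (hBfin : ∀ i, (B i).Finite)
    (hAB : ∀ i, ∀ a ∈ A i, ∀ b ∈ B i, L i a b) :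
    ∃ d, ∀ i, (∀ a ∈ A i, L i a d) ∧ ∀ b ∈ B i, L i d b := by
  choose lo hlo_mem hlo using fun i =>
    exists_option_forall_rel_of_isChain_of_finite (r := Function.swap (L i))
      (hAchain i).symm (hAfin i)
  choose hi hhi_mem hhi using fun i =>
    exists_option_forall_rel_of_isChain_of_finite (hBchain i) (hBfin i)
  obtain ⟨d, hd⟩ := hdense lo hi fun i a b ha hb =>
    hAB i a (hlo_mem i a ha) b (hhi_mem i b hb)
  exact ⟨d, fun i => ⟨hlo i d (hd i).1, hhi i d (hd i).2⟩⟩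

/-- `g` is strictly monotone on `S` from `rQ i` to `rX i`, simultaneously for every index `i`.
This is the property of partial maps that is propagated point by point; partial maps are encoded
as total ones together with a domain `S`. -/
def IncreasingOn {ι Q X : Type*} (rQ : ι → Q → Q → Prop) (rX : ι → X → X → Prop)
    (g : Q → X) (S : Set Q) : Prop :=
  ∀ i, ∀ p ∈ S, ∀ q ∈ S, rQ i p q → rX i (g p) (g q)

namespace IncreasingOn

section

variable {ι Q X : Type*} {rQ : ι → Q → Q → Prop} {rX : ι → X → X → Prop} {g : Q → X} {S : Set Q}

theorem mono {T : Set Q} (hg : IncreasingOn rQ rX g S) (hTS : T ⊆ S) : IncreasingOn rQ rX g T :=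
  fun i p hp q hq => hg i p (hTS hp) q (hTS hq)

theorem isChain_image (hg : IncreasingOn rQ rX g S) (i : ι) [Std.Trichotomous (rQ i)] :
    IsChain (rX i) (g '' S) := by
  rintro _ ⟨p, hp, rfl⟩ _ ⟨q, hq, rfl⟩ hne
  rcases trichotomous_of (rQ i) p q with hpq | rfl | hqp
  · exact Or.inl (hg i p hp q hq hpq)
  · exact absurd rfl hne
  · exact Or.inr (hg i q hq p hp hqp)

theorem update_insert [DecidableEq Q] [∀ i, Std.Irrefl (rQ i)] (hg : IncreasingOn rQ rX g S)
    {x : Q} (hx : x ∉ S) {d : X} (hbelow : ∀ i, ∀ p ∈ S, rQ i p x → rX i (g p) d)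
    (habove : ∀ i, ∀ q ∈ S, rQ i x q → rX i d (g q)) :
    IncreasingOn rQ rX (Function.update g x d) (insert x S) := by
  have hupdate : ∀ p ∈ S, Function.update g x d p = g p := fun p hp =>
    Function.update_of_ne (ne_of_mem_of_not_mem hp hx) d g
  rintro i p (rfl | hp) q (rfl | hq) hpq
  · exact absurd hpq (irrefl_of (rQ i) _)
  · simpa only [Function.update_self, hupdate q hq] using habove i q hq hpq
  · simpa only [Function.update_self, hupdate p hp] using hbelow i p hp hpq
  · simpa only [hupdate p hp, hupdate q hq] using hg i p hp q hq hpq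

end

section

variable {n : ℕ} {X : Type} {LX : Fin n → X → X → Prop} [∀ i, IsStrictOrder X (LX i)]
  {Q : Type*} {LQ : Fin n → Q → Q → Prop} [∀ i, IsStrictTotalOrder Q (LQ i)]
  {g : Q → X} {S : Set Q}

theorem exists_update_insert [DecidableEq Q] (hdense : RegionDense n LX)
    (hg : IncreasingOn LQ LX g S) (hS : S.Finite) {x : Q} (hx : x ∉ S) :
    ∃ d, IncreasingOn LQ LX (Function.update g x d) (insert x S) := by
  have hchain : ∀ (i : Fin n) (T : Set Q), T ⊆ S → IsChain (LX i) (g '' T) :=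
    fun i _ hT => (hg.mono hT).isChain_image i
  have hfin : ∀ T ⊆ S, (g '' T).Finite := fun _ hT => (hS.subset hT).image g
  obtain ⟨d, hd⟩ := hdense.exists_between_finite_chains
    (A := fun i => g '' {p ∈ S | LQ i p x}) (B := fun i => g '' {q ∈ S | LQ i x q})
    (fun i => hchain i _ (Set.sep_subset S _)) (fun _ => hfin _ (Set.sep_subset S _))
    (fun i => hchain i _ (Set.sep_subset S _)) (fun _ => hfin _ (Set.sep_subset S _)) <| by
      rintro i _ ⟨p, ⟨hp, hpx⟩, rfl⟩ _ ⟨q, ⟨hq, hxq⟩, rfl⟩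
      exact hg i p hp q hq (_root_.trans hpx hxq)
  exact ⟨d, hg.update_insert hx
    (fun i p hp hpx => (hd i).1 _ (Set.mem_image_of_mem g ⟨hp, hpx⟩))
    (fun i q hq hxq => (hd i).2 _ (Set.mem_image_of_mem g ⟨hq, hxq⟩))⟩

theorem exists_extension_union (hdense : RegionDense n LX) (hg : IncreasingOn LQ LX g S)
    (hS : S.Finite) {T : Set Q} (hT : T.Finite) :
    ∃ g' : Q → X, Set.EqOn g' g S ∧ IncreasingOn LQ LX g' (S ∪ T) := by
  classical
  induction T, hT using Set.Finite.induction_on with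
  | empty => exact ⟨g, Set.eqOn_refl g S, by rwa [Set.union_empty]⟩
  | @insert x T _ hT ih =>
    obtain ⟨g', heq, hg'⟩ := ih
    rw [Set.union_insert]
    by_cases hx : x ∈ S ∪ T
    · exact ⟨g', heq, by rwa [Set.insert_eq_of_mem hx]⟩
    · obtain ⟨d, hd⟩ := hg'.exists_update_insert hdense (hS.union hT) hx
      refine ⟨Function.update g' x d, fun p hp => ?_, hd⟩
      rw [Function.update_of_ne (ne_of_mem_of_not_mem (Or.inl hp) hx), heq hp]

end

end IncreasingOn

theorem stmt_8_general {n : ℕ} (hn : n ≠ 0) {X : Type} {LX : Fin n → X → X → Prop}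
    [∀ i, IsStrictOrder X (LX i)] (hdense : RegionDense n LX)
    {Q : Type*} [Finite Q] {LQ : Fin n → Q → Q → Prop} [∀ i, IsStrictTotalOrder Q (LQ i)]
    {P : Set Q} {f : Q → X} (hf : IncreasingOn LQ LX f P) :
    ∃ g : Q → X, Function.Injective g ∧ (∀ p ∈ P, g p = f p) ∧
      ∀ i : Fin n, ∀ p q : Q, LQ i p q ↔ LX i (g p) (g q) := by
  obtain ⟨g, hgf, hg⟩ := hf.exists_extension_union hdense P.toFinite Set.finite_univ
  rw [Set.union_univ] at hg
  let e (i : Fin n) : LQ i ↪r LX i :=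
    RelEmbedding.ofMonotone g fun p q => hg i p trivial q trivial
  exact ⟨g, (e ⟨0, Nat.pos_of_ne_zero hn⟩).injective, hgf, fun i _ _ => (e i).map_rel_iff.symm⟩

/-- embeddings of subsets of finite sets with `n` linear orders into a
region-dense structure `(X, <_1, …, <_n)` extend to embeddings of the whole finite set. -/
theorem stmt_8 (n : ℕ) (hn : 2 ≤ n)
    (X : Type) (LX : Fin n → X → X → Prop)
    (hLX : ∀ i, IsStrictTotalOrder X (LX i)) (hdense : RegionDense n LX)
    (Q : Type) [Fintype Q] (LQ : Fin n → Q → Q → Prop)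
    (hLQ : ∀ i, IsStrictTotalOrder Q (LQ i))
    (P : Set Q) (f : Q → X) (hfinj : Set.InjOn f P)
    (hf : ∀ i : Fin n, ∀ p ∈ P, ∀ q ∈ P, LQ i p q ↔ LX i (f p) (f q)) :
    ∃ g : Q → X, Function.Injective g ∧ (∀ p ∈ P, g p = f p) ∧
      ∀ i : Fin n, ∀ p q : Q, LQ i p q ↔ LX i (g p) (g q) := by
  exact stmt_8_general (by omega) hdense fun i p hp q hq => (hf i p hp q hq).1
end

section
/- Fix n ≥ 2. Any two countable sets X and Y, each equipped with n linear orders <_1,...,<_n satisfying the region-density property, are isomorphic: there exists a bijection g : X → Y such that a <_i b iff g(a) <_i g(b) for all i ≤ n and a, b ∈ X. In particular, every countable such structure is isomorphic to (D, <_1,...,<_n) for any Manaster–Remmel set D ⊆ ℚ^n with its coordinate orders. -/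
/-!
Back-and-forth. Given a finite partial isomorphism `f` and a new point `a`, the images under `f` of
the points below and above `a` in the `i`-th order form a finite cut of the target. Only the largest
lower and the smallest upper element of each cut matter, so region density yields a single `b`
filling the cuts for all `i` at once, and `f` extends by `a ↦ b`. Extending alternately on both
sides along enumerations exhausts two countable structures. For a dense `D`, filling the cuts means
meeting a nonempty open box.
-/

open Function

section BackAndForth

variable {ι α β : Type*} {r : ι → α → α → Prop} {s : ι → β → β → Prop}

variable (r s) in
/-- The pairs `p` and `q` agree: mapping `p.1 ↦ p.2` and `q.1 ↦ q.2` preserves and reflects equality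
and every relation of the family, in the direction from `p` to `q`. -/
def PairsAgree (p q : α × β) : Prop :=
  (p.1 = q.1 ↔ p.2 = q.2) ∧ ∀ i, r i p.1 q.1 ↔ s i p.2 q.2

variable (r s) in
/-- A partial isomorphism between two sets with families of binary relations, encoded as its
graph. -/
def IsPartialIso (f : Set (α × β)) : Prop :=
  ∀ ⦃p⦄, p ∈ f → ∀ ⦃q⦄, q ∈ f → PairsAgree r s p q

variable (r s) in
/-- The finite partial isomorphisms, ordered by extension: the poset of approximations in the
back-and-forth construction. -/
abbrev FinitePartialIso : Type _ :=
  {f : Set (α × β) // f.Finite ∧ IsPartialIso r s f}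

variable (r s) in
/-- The forth property: every finite partial isomorphism extends to any further point of the
source. The back property is `IsExtensionPair s r`. -/
def IsExtensionPair : Prop :=
  ∀ ⦃f : Set (α × β)⦄, f.Finite → IsPartialIso r s f → ∀ a, ∃ b, IsPartialIso r s (insert (a, b) f)

theorem isPartialIso_empty : IsPartialIso r s ∅ :=
  fun _ hp ↦ hp.elim

theorem IsPartialIso.preimage_swap {f : Set (α × β)} (hf : IsPartialIso r s f) :
    IsPartialIso s r (Prod.swap ⁻¹' f) :=
  fun _ hp _ hq ↦ ⟨(hf hp hq).1.symm, fun i ↦ ((hf hp hq).2 i).symm⟩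

theorem IsPartialIso.insert {f : Set (α × β)} (hf : IsPartialIso r s f) {p : α × β}
    (hp : PairsAgree r s p p) (hpf : ∀ q ∈ f, PairsAgree r s p q ∧ PairsAgree r s q p) :
    IsPartialIso r s (insert p f) := by
  rintro x (rfl | hx) y (rfl | hy)
  · exact hp
  · exact (hpf y hy).1
  · exact (hpf x hx).2
  · exact hf hx hy

theorem IsPartialIso.sUnion {c : Set (Set (α × β))} (hc : DirectedOn (· ⊆ ·) c)
    (hiso : ∀ f ∈ c, IsPartialIso r s f) : IsPartialIso r s (⋃₀ c) := by
  rintro p ⟨f, hf, hp⟩ q ⟨g, hg, hq⟩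
  obtain ⟨k, hk, hfk, hgk⟩ := hc f hf g hg
  exact hiso k hk (hfk hp) (hgk hq)

theorem IsPartialIso.exists_bijective {f : Set (α × β)} (hf : IsPartialIso r s f)
    (hdom : ∀ a, ∃ b, (a, b) ∈ f) (hran : ∀ b, ∃ a, (a, b) ∈ f) :
    ∃ g : α → β, Bijective g ∧ ∀ i a b, r i a b ↔ s i (g a) (g b) := by
  choose g hg using hdom
  refine ⟨g, ⟨fun a b hab ↦ (hf (hg a) (hg b)).1.2 hab, fun b ↦ ?_⟩,
    fun i a b ↦ (hf (hg a) (hg b)).2 i⟩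
  obtain ⟨a, ha⟩ := hran b
  exact ⟨a, (hf (hg a) ha).1.1 rfl⟩

theorem IsExtensionPair.isCofinal_mem_dom (h : IsExtensionPair r s) (a : α) :
    IsCofinal {f : FinitePartialIso r s | ∃ b, (a, b) ∈ f.1} := by
  rintro ⟨f, hfin, hf⟩
  obtain ⟨b, hb⟩ := h hfin hf a
  exact ⟨⟨_, hfin.insert _, hb⟩, ⟨b, Set.mem_insert _ _⟩, Set.subset_insert _ _⟩

theorem IsExtensionPair.isCofinal_mem_range (h : IsExtensionPair s r) (b : β) :
    IsCofinal {f : FinitePartialIso r s | ∃ a, (a, b) ∈ f.1} := by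
  rintro ⟨f, hfin, hf⟩
  have hfin_swap : (Prod.swap ⁻¹' f).Finite := hfin.preimage Prod.swap_injective.injOn
  obtain ⟨a, ha⟩ := h hfin_swap hf.preimage_swap b
  exact ⟨⟨Prod.swap ⁻¹' insert (b, a) (Prod.swap ⁻¹' f),
    (hfin_swap.insert _).preimage Prod.swap_injective.injOn, ha.preimage_swap⟩,
    ⟨a, Set.mem_insert _ _⟩, fun _ hp ↦ Set.mem_insert_of_mem _ hp⟩

theorem exists_bijective_of_isExtensionPair [Countable α] [Countable β]
    (hforth : IsExtensionPair r s) (hback : IsExtensionPair s r) :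
    ∃ g : α → β, Bijective g ∧ ∀ i a b, r i a b ↔ s i (g a) (g b) := by
  obtain ⟨_⟩ := nonempty_encodable α
  obtain ⟨_⟩ := nonempty_encodable β
  let 𝒟 : α ⊕ β → Order.Cofinal (FinitePartialIso r s) :=
    Sum.elim (fun a ↦ ⟨_, hforth.isCofinal_mem_dom a⟩) (fun b ↦ ⟨_, hback.isCofinal_mem_range b⟩)
  let I := Order.idealOfCofinals ⟨∅, Set.finite_empty, isPartialIso_empty⟩ 𝒟
  have hmeet : ∀ x, ∃ f, f ∈ 𝒟 x ∧ f ∈ I := Order.cofinal_meets_idealOfCofinals _ 𝒟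
  have hdirected : DirectedOn (· ⊆ ·) (Subtype.val '' (I : Set (FinitePartialIso r s))) :=
    directedOn_image.2 I.directed
  have hiso : IsPartialIso r s (⋃₀ (Subtype.val '' (I : Set (FinitePartialIso r s)))) :=
    .sUnion hdirected (by rintro _ ⟨f, -, rfl⟩; exact f.2.2)
  refine hiso.exists_bijective (fun a ↦ ?_) (fun b ↦ ?_)
  · obtain ⟨f, ⟨b, hb⟩, hf⟩ := hmeet (.inl a)
    exact ⟨b, f.1, Set.mem_image_of_mem _ hf, hb⟩
  · obtain ⟨f, ⟨a, ha⟩, hf⟩ := hmeet (.inr b)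
    exact ⟨a, f.1, Set.mem_image_of_mem _ hf, ha⟩

end BackAndForth

section RegionDense

variable {ι α β : Type*} {r : ι → α → α → Prop} {s : ι → β → β → Prop}

variable (r) in
/-- The region-density property for a family of relations over an arbitrary index type, with `none`
in the role of `⊥`. `RegionDense n` is definitionally the case `ι = Fin n`. -/
def IsRegionDense : Prop :=
  ∀ lo hi : ι → Option α, (∀ i a b, lo i = some a → hi i = some b → r i a b) →
    ∃ d, ∀ i, (∀ a, lo i = some a → r i a d) ∧ ∀ b, hi i = some b → r i d b

/-- The witness is the `ρ`-largest element of `A`, or `none` if `A` is empty. -/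
theorem exists_option_mem_forall_rel {ρ : α → α → Prop} [IsStrictTotalOrder α ρ] {A : Set α}
    (hA : A.Finite) :
    ∃ o : Option α, (∀ a, o = some a → a ∈ A) ∧
      ∀ d, (∀ a, o = some a → ρ a d) → ∀ a ∈ A, ρ a d := by
  classical
  obtain rfl | hne := A.eq_empty_or_nonempty
  · exact ⟨none, by simp⟩
  let _ : LinearOrder α := linearOrderOfSTO ρ
  obtain ⟨m, hmA, hmax⟩ := A.exists_max_image id hA hne
  refine ⟨some m, by simpa using hmA, fun d hd a ha ↦ ?_⟩
  exact (hmax a ha).trans_lt (hd m rfl)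

theorem IsRegionDense.exists_between_finite [∀ i, IsStrictTotalOrder α (r i)]
    (h : IsRegionDense r) {A B : ι → Set α} (hA : ∀ i, (A i).Finite) (hB : ∀ i, (B i).Finite)
    (hAB : ∀ i, ∀ a ∈ A i, ∀ b ∈ B i, r i a b) :
    ∃ d, ∀ i, (∀ a ∈ A i, r i a d) ∧ ∀ b ∈ B i, r i d b := by
  choose lo hlo_mem hlo using fun i ↦ exists_option_mem_forall_rel (ρ := r i) (hA i)
  choose hi hhi_mem hhi using fun i ↦ exists_option_mem_forall_rel (ρ := swap (r i)) (hB i)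
  obtain ⟨d, hd⟩ := h lo hi fun i a b ha hb ↦ hAB i a (hlo_mem i a ha) b (hhi_mem i b hb)
  exact ⟨d, fun i ↦ ⟨hlo i d (hd i).1, hhi i d (hd i).2⟩⟩

theorem pairsAgree_self [∀ i, Std.Irrefl (r i)] [∀ i, Std.Irrefl (s i)] (p : α × β) :
    PairsAgree r s p p :=
  ⟨iff_of_true rfl rfl, fun i ↦ iff_of_false (irrefl_of (r i) _) (irrefl_of (s i) _)⟩

theorem pairsAgree_of_imp [Nonempty ι] [∀ i, Std.Trichotomous (r i)]
    [∀ i, Std.Asymm (s i)] {p q : α × β} (hne : p.1 ≠ q.1)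
    (hpq : ∀ i, r i p.1 q.1 → s i p.2 q.2) (hqp : ∀ i, r i q.1 p.1 → s i q.2 p.2) :
    PairsAgree r s p q := by
  have hcmp : ∀ i, r i p.1 q.1 ∨ r i q.1 p.1 := fun i ↦
    (trichotomous_of (r i) p.1 q.1).imp_right fun h ↦ h.resolve_left hne
  have hne' : p.2 ≠ q.2 := by
    obtain ⟨i⟩ := ‹Nonempty ι›
    exact (hcmp i).elim (fun h ↦ ne_of_irrefl (hpq i h)) fun h ↦ ne_of_irrefl' (hqp i h)
  refine ⟨iff_of_false hne hne', fun i ↦ ⟨hpq i, fun hs ↦ (hcmp i).resolve_right fun hr ↦ ?_⟩⟩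
  exact asymm_of (s i) hs (hqp i hr)

theorem IsRegionDense.exists_image_of_isPartialIso [∀ i, IsTrans α (r i)]
    [∀ i, IsStrictTotalOrder β (s i)] (hs : IsRegionDense s) {f : Set (α × β)} (hfin : f.Finite)
    (hf : IsPartialIso r s f) (a : α) :
    ∃ b, ∀ p ∈ f, ∀ i, (r i p.1 a → s i p.2 b) ∧ (r i a p.1 → s i b p.2) := by
  obtain ⟨b, hb⟩ := hs.exists_between_finite
    (A := fun i ↦ Prod.snd '' {p ∈ f | r i p.1 a}) (B := fun i ↦ Prod.snd '' {p ∈ f | r i a p.1})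
    (fun i ↦ (hfin.sep _).image _) (fun i ↦ (hfin.sep _).image _) (by
      rintro i _ ⟨p, ⟨hp, hpa⟩, rfl⟩ _ ⟨q, ⟨hq, haq⟩, rfl⟩
      exact ((hf hp hq).2 i).1 (trans_of (r i) hpa haq))
  exact ⟨b, fun p hp i ↦
    ⟨fun h ↦ (hb i).1 _ ⟨p, ⟨hp, h⟩, rfl⟩, fun h ↦ (hb i).2 _ ⟨p, ⟨hp, h⟩, rfl⟩⟩⟩

theorem IsRegionDense.isExtensionPair [Nonempty ι] [∀ i, IsStrictTotalOrder α (r i)]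
    [∀ i, IsStrictTotalOrder β (s i)] (hs : IsRegionDense s) : IsExtensionPair r s := by
  intro f hfin hf a
  by_cases ha : ∃ b, (a, b) ∈ f
  · obtain ⟨b, hab⟩ := ha
    exact ⟨b, by rwa [Set.insert_eq_of_mem hab]⟩
  obtain ⟨b, hb⟩ := hs.exists_image_of_isPartialIso hfin hf a
  refine ⟨b, hf.insert (pairsAgree_self _) fun p hp ↦ ?_⟩
  have hne : a ≠ p.1 := fun h ↦ ha ⟨p.2, by rwa [h]⟩
  exact ⟨pairsAgree_of_imp hne (fun i ↦ (hb p hp i).2) fun i ↦ (hb p hp i).1,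
    pairsAgree_of_imp hne.symm (fun i ↦ (hb p hp i).1) fun i ↦ (hb p hp i).2⟩

theorem IsRegionDense.exists_bijective [Nonempty ι] [Countable α] [Countable β]
    [∀ i, IsStrictTotalOrder α (r i)] [∀ i, IsStrictTotalOrder β (s i)]
    (hr : IsRegionDense r) (hs : IsRegionDense s) :
    ∃ g : α → β, Bijective g ∧ ∀ i a b, r i a b ↔ s i (g a) (g b) :=
  exists_bijective_of_isExtensionPair hs.isExtensionPair hr.isExtensionPair

end RegionDense

section Coordinates

theorem isOpen_setOf_between_finsets {K : Type*} [LinearOrder K] [TopologicalSpace K]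
    [OrderClosedTopology K] (A B : Finset K) :
    IsOpen {x : K | (∀ a ∈ A, a < x) ∧ ∀ b ∈ B, x < b} := by
  simp only [Set.ofPred_and, Set.ofPred_forall]
  exact (isOpen_biInter_finset fun a _ ↦ isOpen_Ioi).inter
    (isOpen_biInter_finset fun b _ ↦ isOpen_Iio)

variable {ι : Type*} {K : ι → Type*} [∀ i, LinearOrder (K i)] {D : Set (∀ i, K i)}

theorem isStrictTotalOrder_coord_lt {i : ι} (hinj : Set.InjOn (fun x ↦ x i) D) :
    IsStrictTotalOrder D fun x y ↦ x.1 i < y.1 i :=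
  (RelEmbedding.preimage ⟨_, hinj.injective⟩ (· < ·)).isStrictTotalOrder

variable [Finite ι] [∀ i, DenselyOrdered (K i)] [∀ i, NoMinOrder (K i)] [∀ i, NoMaxOrder (K i)]
  [∀ i, Nonempty (K i)] [∀ i, TopologicalSpace (K i)] [∀ i, OrderClosedTopology (K i)]

theorem exists_mem_dense_between_finsets (hD : Dense D) {A B : ∀ i, Finset (K i)}
    (hAB : ∀ i, ∀ a ∈ A i, ∀ b ∈ B i, a < b) :
    ∃ x ∈ D, ∀ i, (∀ a ∈ A i, a < x i) ∧ ∀ b ∈ B i, x i < b := by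
  obtain ⟨x, hx, hxD⟩ := hD.inter_open_nonempty
    (Set.univ.pi fun i ↦ {x : K i | (∀ a ∈ A i, a < x) ∧ ∀ b ∈ B i, x < b})
    (isOpen_set_pi Set.finite_univ fun i _ ↦ isOpen_setOf_between_finsets (A i) (B i))
    (Set.univ_pi_nonempty_iff.2 fun i ↦ Order.exists_between_finsets (A i) (B i) (hAB i))
  exact ⟨x, hxD, fun i ↦ hx i (Set.mem_univ i)⟩

theorem isRegionDense_coord_lt (hD : Dense D) :
    IsRegionDense fun i (x y : D) ↦ x.1 i < y.1 i := by
  intro lo hi hlohi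
  obtain ⟨d, hdD, hd⟩ := exists_mem_dense_between_finsets hD
    (A := fun i ↦ (lo i).toFinset.image (·.1 i)) (B := fun i ↦ (hi i).toFinset.image (·.1 i))
    (by simpa only [Finset.forall_mem_image, Option.mem_toFinset, Option.mem_def] using
      fun i _ ha _ hb ↦ hlohi i _ _ ha hb)
  simp only [Finset.forall_mem_image, Option.mem_toFinset, Option.mem_def] at hd
  exact ⟨⟨d, hdD⟩, fun i ↦ ⟨fun _ ha ↦ (hd i).1 ha, fun _ hb ↦ (hd i).2 hb⟩⟩

theorem stmt_9_general [Nonempty ι] {α β : Type*} [Countable α] [Countable β]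
    {r : ι → α → α → Prop} {s : ι → β → β → Prop}
    [∀ i, IsStrictTotalOrder α (r i)] [∀ i, IsStrictTotalOrder β (s i)]
    (hr : IsRegionDense r) (hs : IsRegionDense s) :
    (∃ g : α → β, Bijective g ∧ ∀ i a b, r i a b ↔ s i (g a) (g b)) ∧
    ∀ D : Set (∀ i, K i), D.Countable → Dense D → (∀ i, Set.InjOn (fun x ↦ x i) D) →
      ∃ g : α → D, Bijective g ∧ ∀ i a b, r i a b ↔ (g a).1 i < (g b).1 i := by
  refine ⟨hr.exists_bijective hs, fun D hcount hdense hinj ↦ ?_⟩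
  have : Countable D := hcount
  have := fun i ↦ isStrictTotalOrder_coord_lt (hinj i)
  exact hr.exists_bijective (isRegionDense_coord_lt hdense)

end Coordinates

theorem MRSet.injOn_coord {n : ℕ} {D : Set (Fin n → ℚ)} (hD : MRSet n D) (i : Fin n) :
    Set.InjOn (fun x ↦ x i) D :=
  fun a ha b hb hab ↦ by_contra fun hne ↦ hD.2 a ha b hb hne i hab

/-- any two countable region-dense structures with `n` linear orders are
isomorphic; in particular, every such structure is isomorphic to `(D, <_1, …, <_n)` for
any Manaster–Remmel set `D ⊆ ℚ^n` with its coordinate orders. -/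
theorem stmt_9 (n : ℕ) (hn : 2 ≤ n)
    (X Y : Type) [Countable X] [Countable Y]
    (LX : Fin n → X → X → Prop) (LY : Fin n → Y → Y → Prop)
    (hLX : ∀ i, IsStrictTotalOrder X (LX i))
    (hLY : ∀ i, IsStrictTotalOrder Y (LY i))
    (hdX : RegionDense n LX) (hdY : RegionDense n LY) :
    (∃ g : X → Y, Function.Bijective g ∧
      ∀ i : Fin n, ∀ a b : X, LX i a b ↔ LY i (g a) (g b)) ∧
    ∀ D : Set (Fin n → ℚ), MRSet n D →
      ∃ g : X → ↥D, Function.Bijective g ∧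
        ∀ i : Fin n, ∀ a b : X, LX i a b ↔ (g a : Fin n → ℚ) i < (g b : Fin n → ℚ) i := by
  have : Nonempty (Fin n) := ⟨⟨0, by lia⟩⟩
  exact (stmt_9_general hdX hdY).imp_right fun h D hD ↦ h D D.to_countable hD.1 hD.injOn_coord
end

section
/- Fix n ≥ 2. The class of finite sets with n linear orders has the Ramsey property: for every k ≥ 1 and all finite sets A and B, each equipped with n linear orders, such that A embeds into B, there exists a finite set C equipped with n linear orders such that for every function c from the set of substructures of C isomorphic to A into {1,...,k}, there is a substructure B₀ of C isomorphic to B with c constant on the set of substructures of B₀ isomorphic to A. -/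
/-- `S` is a substructure of `(β, Lβ)` isomorphic to `(α, Lα)`: the image of an embedding
of `(α, Lα)` into `(β, Lβ)` (with respect to the `n` linear orders). -/
def IsCopy {n : ℕ} {α β : Type} (Lα : Fin n → α → α → Prop) (Lβ : Fin n → β → β → Prop)
    (S : Set β) : Prop :=
  ∃ e : α → β, Set.range e = S ∧ Function.Injective e ∧
    ∀ i : Fin n, ∀ a b : α, Lα i a b ↔ Lβ i (e a) (e b)

/-!
If `C` is a grid `∏ i, Fin (N i)` whose `i`-th order compares `i`-th coordinates first, then a map
into `C` that is increasing in each coordinate is an embedding of `n` linear orders, and it is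
determined by the tuple of its coordinate ranges. A colouring of the copies of `A` in `C` therefore
induces a colouring of tuples of `|A|`-element sets, one in each factor. The product Ramsey theorem
makes the latter constant on the tuples drawn from some sets `M i` of size `|B|`, and enumerating
each `M i` along the `i`-th order of `B` yields the required copy of `B`.
-/

open Finset

universe u

section FiniteRamsey

variable {α : Type u} {κ : Type*}

/-- The subsets of `Y` of size `a` all receive the same colour under `c`. -/
def IsHomogeneous (c : Finset α → κ) (a : ℕ) (Y : Finset α) : Prop :=
  ∃ col, ∀ S ⊆ Y, #S = a → c S = col

theorem IsHomogeneous.mono {c : Finset α → κ} {a : ℕ} {Y Z : Finset α}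
    (hY : IsHomogeneous c a Y) (hZY : Z ⊆ Y) : IsHomogeneous c a Z :=
  let ⟨col, hcol⟩ := hY
  ⟨col, fun S hS => hcol S (hS.trans hZY)⟩

/-- The colour under `c` of a subset of `Y` of size `a + 1` depends only on its least element:
the intermediate notion in the induction step of Ramsey's theorem. -/
def IsEndHomogeneous [LinearOrder α] (c : Finset α → κ) (a : ℕ) (Y : Finset α) : Prop :=
  ∃ d : α → κ, ∀ x ∈ Y, ∀ S ⊆ Y, #S = a → (∀ y ∈ S, x < y) → c (insert x S) = d x

theorem IsEndHomogeneous.insert_of_forall_lt [LinearOrder α] {c : Finset α → κ} {a : ℕ} {x : α}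
    {Y : Finset α} (hY : IsEndHomogeneous c a Y) (hx : ∀ y ∈ Y, x < y)
    (hxY : IsHomogeneous (fun S => c (insert x S)) a Y) : IsEndHomogeneous c a (insert x Y) := by
  obtain ⟨d, hd⟩ := hY
  obtain ⟨col, hcol⟩ := hxY
  refine ⟨Function.update d x col, fun z hz S hS hSa hzS => ?_⟩
  have hxz : x ≤ z := (mem_insert.1 hz).elim Eq.ge fun h => (hx z h).le
  have hSY : S ⊆ Y :=
    (subset_insert_iff_of_notMem fun h => (hzS x h).not_ge hxz).1 hS
  rcases mem_insert.1 hz with rfl | hzY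
  · rw [Function.update_self]
    exact hcol S hSY hSa
  · rw [Function.update_of_ne (hx z hzY).ne']
    exact hd z hzY S hSY hSa hzS

theorem exists_isEndHomogeneous [Nonempty κ] {a : ℕ}
    (ramsey : ∀ b, ∃ N, ∀ {α : Type u} (X : Finset α), N ≤ #X → ∀ c : Finset α → κ,
      ∃ Y ⊆ X, #Y = b ∧ IsHomogeneous c a Y) (m : ℕ) :
    ∃ N, ∀ {α : Type u} [LinearOrder α] (X : Finset α), N ≤ #X → ∀ c : Finset α → κ,
      ∃ Y ⊆ X, #Y = m ∧ IsEndHomogeneous c a Y := by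
  induction m with
  | zero =>
    exact ⟨0, fun X _ c => ⟨∅, by simp, by simp, fun _ => Classical.arbitrary κ, by simp⟩⟩
  | succ m ih =>
    obtain ⟨N, hN⟩ := ih
    obtain ⟨R, hR⟩ := ramsey N
    refine ⟨R + 1, fun {α} _ X hX c => ?_⟩
    have hX₀ : X.Nonempty := card_pos.1 (by omega)
    set x := X.min' hX₀
    have hxX : x ∈ X := X.min'_mem hX₀
    obtain ⟨Z, hZX, hZN, hZ⟩ := hR (X.erase x)
      (by rw [card_erase_of_mem hxX]; omega) (fun S => c (insert x S))
    obtain ⟨Y, hYZ, hYm, hY⟩ := hN Z hZN.ge c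
    have hYX : Y ⊆ X.erase x := hYZ.trans hZX
    have hxY : ∀ y ∈ Y, x < y := fun y hy => X.min'_lt_of_mem_erase_min' hX₀ (hYX hy)
    refine ⟨insert x Y, insert_subset hxX (hYX.trans (erase_subset _ _)), ?_,
      hY.insert_of_forall_lt hxY (hZ.mono hYZ)⟩
    rw [card_insert_of_notMem fun h => (hxY x h).false, hYm]

theorem IsEndHomogeneous.exists_isHomogeneous [LinearOrder α] [Fintype κ] [Nonempty κ]
    {c : Finset α → κ} {a b : ℕ} {Y : Finset α} (hY : IsEndHomogeneous c a Y)
    (hb : Fintype.card κ * b ≤ #Y) : ∃ Z ⊆ Y, #Z = b ∧ IsHomogeneous c (a + 1) Z := by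
  classical
  obtain ⟨d, hd⟩ := hY
  obtain ⟨col, -, hcol⟩ := exists_le_card_fiber_of_mul_le_card_of_maps_to
    (fun x _ => mem_univ (d x)) univ_nonempty hb
  obtain ⟨Z, hZ, hZb⟩ := exists_subset_card_eq hcol
  have hZY : Z ⊆ Y := hZ.trans (filter_subset _ _)
  refine ⟨Z, hZY, hZb, col, fun S hS hSa => ?_⟩
  have hS₀ : S.Nonempty := card_pos.1 (by omega)
  have hmin : S.min' hS₀ ∈ S := S.min'_mem hS₀
  calc c S = c (insert (S.min' hS₀) (S.erase (S.min' hS₀))) := by rw [insert_erase hmin]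
    _ = d (S.min' hS₀) :=
      hd _ (hZY (hS hmin)) _ ((erase_subset _ _).trans (hS.trans hZY))
        (by rw [card_erase_of_mem hmin]; omega) fun _ => S.min'_lt_of_mem_erase_min' hS₀
    _ = col := (mem_filter.1 (hZ (hS hmin))).2

theorem finite_ramsey (κ : Type*) [Finite κ] (a b : ℕ) :
    ∃ N, ∀ {α : Type u} (X : Finset α), N ≤ #X → ∀ c : Finset α → κ,
      ∃ Y ⊆ X, #Y = b ∧ IsHomogeneous c a Y := by
  classical
  cases nonempty_fintype κ
  rcases isEmpty_or_nonempty κ with _ | _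
  · exact ⟨0, fun X _ c => isEmptyElim (c X)⟩
  induction a generalizing b with
  | zero =>
    refine ⟨b, fun X hX c => ?_⟩
    obtain ⟨Y, hYX, hYb⟩ := exists_subset_card_eq hX
    exact ⟨Y, hYX, hYb, c ∅, fun S _ hS => by rw [card_eq_zero.1 hS]⟩
  | succ a ih =>
    obtain ⟨N, hN⟩ := exists_isEndHomogeneous ih (Fintype.card κ * b)
    refine ⟨N, fun {α} X hX c => ?_⟩
    let : LinearOrder α := linearOrderOfSTO WellOrderingRel
    obtain ⟨Y, hYX, hYcard, hY⟩ := hN X hX c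
    obtain ⟨Z, hZY, hZ⟩ := hY.exists_isHomogeneous hYcard.ge
    exact ⟨Z, hZY.trans hYX, hZ⟩

-- The first factor is coloured by functions of the remaining coordinates, which are finite in
-- number because the sizes `N` of the other factors are chosen beforehand.
theorem product_ramsey (κ : Type*) [Finite κ] {n : ℕ} (a b : Fin n → ℕ) :
    ∃ N : Fin n → ℕ, ∀ c : (∀ i, Finset (Fin (N i))) → κ,
      ∃ M : ∀ i, Finset (Fin (N i)), (∀ i, #(M i) = b i) ∧
        ∃ col, ∀ S : ∀ i, Finset (Fin (N i)), (∀ i, S i ⊆ M i) → (∀ i, #(S i) = a i) →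
          c S = col := by
  induction n with
  | zero =>
    exact ⟨Fin.elim0, fun c => ⟨fun i => i.elim0, fun i => i.elim0, c fun i => i.elim0,
      fun S _ _ => congrArg c (Subsingleton.elim _ _)⟩⟩
  | succ n ih =>
    obtain ⟨N, hN⟩ := ih (Fin.tail a) (Fin.tail b)
    obtain ⟨N₀, hN₀⟩ := finite_ramsey ((∀ i, Finset (Fin (N i))) → κ) (a 0) (b 0)
    refine ⟨Fin.cons N₀ N, fun c => ?_⟩
    obtain ⟨M₀, -, hM₀b, color, hcolor⟩ := hN₀ (univ : Finset (Fin N₀)) (by simp)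
      (fun S₀ S => c (Fin.cons S₀ S))
    obtain ⟨M, hMb, col, hcol⟩ := hN color
    refine ⟨Fin.cons M₀ M, Fin.cases hM₀b hMb, col, fun S hSM hSa => ?_⟩
    calc c S = c (Fin.cons (S 0) (Fin.tail S)) := by rw [Fin.cons_self_tail]
      _ = color (Fin.tail S) := congrFun (hcolor (S 0) (hSM 0) (hSa 0)) _
      _ = col := hcol _ (fun i => hSM i.succ) (fun i => hSa i.succ)

end FiniteRamsey

section Grid

variable {ι A B : Type*} {β : ι → Type*} [∀ i, LinearOrder (β i)]

/-- The `i`-th linear order on a product: compare `i`-th coordinates, breaking ties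
lexicographically. The choice of tie-break is immaterial. -/
def CoordLT [LinearOrder ι] (i : ι) (x y : ∀ i, β i) : Prop :=
  toLex (x i, toLex x) < toLex (y i, toLex y)

theorem coordLT_of_lt [LinearOrder ι] {i : ι} {x y : ∀ i, β i} (h : x i < y i) : CoordLT i x y :=
  Prod.Lex.toLex_lt_toLex.2 (Or.inl h)

instance CoordLT.isStrictTotalOrder [LinearOrder ι] [WellFoundedLT ι] (i : ι) :
    IsStrictTotalOrder (∀ i, β i) (CoordLT i) :=
  RelEmbedding.isStrictTotalOrder (s := ((· < ·) : β i ×ₗ Lex (∀ i, β i) → _ → Prop))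
    ⟨⟨fun x => toLex (x i, toLex x),
      fun _ _ h => congrArg (fun z : β i ×ₗ Lex (∀ i, β i) => ofLex (ofLex z).2) h⟩, Iff.rfl⟩

/-- `e` is strictly increasing from `L i` to the order of the `i`-th factor, for every `i`. -/
def CoordStrictMono (L : ι → A → A → Prop) (e : A → ∀ i, β i) : Prop :=
  ∀ i a b, L i a b → e a i < e b i

/-- The union of the ranges of all coordinatewise increasing maps with coordinate ranges `S i`.
There is at most one such map when the `L i` are finite linear orders, and defining its range as a
union avoids choosing a value for tuples `S` not arising from any map. -/
def coordSpan (L : ι → A → A → Prop) (S : ∀ i, Finset (β i)) : Set (∀ i, β i) :=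
  {x | ∃ e : A → ∀ i, β i, CoordStrictMono L e ∧ (∀ i, Set.range (e · i) = S i) ∧ x ∈ Set.range e}

namespace CoordStrictMono

variable {L : ι → A → A → Prop} {e e' : A → ∀ i, β i} [∀ i, IsStrictTotalOrder A (L i)]

theorem injective_apply (he : CoordStrictMono L e) (i : ι) : Function.Injective (e · i) :=
  (RelEmbedding.ofMonotone (r := L i) (s := (· < ·)) (e · i) (he i)).injective

theorem coordLT_iff [LinearOrder ι] [WellFoundedLT ι] (he : CoordStrictMono L e) {i : ι} {a b : A} :
    CoordLT i (e a) (e b) ↔ L i a b :=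
  (RelEmbedding.ofMonotone (r := L i) (s := CoordLT i) e
    fun a b h => coordLT_of_lt (he i a b h)).map_rel_iff

theorem eq_of_range_eq [Finite A] (he : CoordStrictMono L e) (he' : CoordStrictMono L e')
    (h : ∀ i, Set.range (e · i) = Set.range (e' · i)) : e = e' := by
  classical
  funext a i
  let : LinearOrder A := linearOrderOfSTO (L i)
  have hmono : StrictMono (e · i) := fun a b hab => he i a b hab
  have hmono' : StrictMono (e' · i) := fun a b hab => he' i a b hab
  exact congrFun ((hmono.range_inj hmono').1 (h i)) a

theorem coordSpan_eq_range [Finite A] (he : CoordStrictMono L e) {S : ∀ i, Finset (β i)}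
    (hS : ∀ i, Set.range (e · i) = S i) : coordSpan L S = Set.range e := by
  ext x
  refine ⟨?_, fun hx => ⟨e, he, hS, hx⟩⟩
  rintro ⟨e', he', hS', hx⟩
  rwa [he.eq_of_range_eq he' fun i => (hS i).trans (hS' i).symm]

end CoordStrictMono

theorem exists_coordStrictMono [Fintype B] (L : ι → B → B → Prop)
    [∀ i, IsStrictTotalOrder B (L i)] (M : ∀ i, Finset (β i)) (hM : ∀ i, #(M i) = Fintype.card B) :
    ∃ F : B → ∀ i, β i, CoordStrictMono L F ∧ ∀ b i, F b i ∈ M i := by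
  classical
  have enumerate (i : ι) : ∃ f : B → β i, (∀ a b, L i a b → f a < f b) ∧ ∀ b, f b ∈ M i := by
    let : LinearOrder B := linearOrderOfSTO (L i)
    let f : B ↪o β i :=
      (monoEquivOfFin B rfl).symm.toOrderEmbedding.trans ((M i).orderEmbOfFin (hM i))
    exact ⟨f, fun a b hab => f.strictMono hab, fun b => orderEmbOfFin_mem _ (hM i) _⟩
  choose f hf hfM using enumerate
  exact ⟨fun b i => f i b, hf, fun b i => hfM i b⟩

-- Within the range of `F` distinct points differ in every coordinate, so `CoordLT i` never needs
-- its tie-break there.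
theorem CoordStrictMono.of_range_subset [LinearOrder ι] [WellFoundedLT ι]
    {LA : ι → A → A → Prop} {LB : ι → B → B → Prop} [∀ i, IsStrictTotalOrder B (LB i)]
    {F : B → ∀ i, β i} (hF : CoordStrictMono LB F) {e : A → ∀ i, β i}
    (he : ∀ i a b, LA i a b → CoordLT i (e a) (e b)) (heF : Set.range e ⊆ Set.range F) :
    CoordStrictMono LA e := by
  intro i a b hab
  obtain ⟨x, hx⟩ := heF ⟨a, rfl⟩
  obtain ⟨y, hy⟩ := heF ⟨b, rfl⟩
  have hxy : CoordLT i (F x) (F y) := hx ▸ hy ▸ he i a b hab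
  exact hx ▸ hy ▸ hF i x y (hF.coordLT_iff.1 hxy)

end Grid

theorem CoordStrictMono.isCopy_range {n : ℕ} [NeZero n] {A : Type} {β : Fin n → Type}
    [∀ i, LinearOrder (β i)] {L : Fin n → A → A → Prop} [∀ i, IsStrictTotalOrder A (L i)]
    {e : A → ∀ i, β i} (he : CoordStrictMono L e) : IsCopy L CoordLT (Set.range e) :=
  ⟨e, rfl, fun _ _ h => he.injective_apply 0 (congrFun h 0), fun _ _ _ => he.coordLT_iff.symm⟩

theorem stmt_12_general {n : ℕ} [NeZero n] (κ : Type*) [Finite κ] {A B : Type} [Finite A]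
    [Finite B] (LA : Fin n → A → A → Prop) (LB : Fin n → B → B → Prop)
    [∀ i, IsStrictTotalOrder A (LA i)] [∀ i, IsStrictTotalOrder B (LB i)] :
    ∃ (C : Type) (_ : Fintype C) (LC : Fin n → C → C → Prop),
      (∀ i, IsStrictTotalOrder C (LC i)) ∧
      ∀ c : Set C → κ,
        ∃ B₀ : Set C, IsCopy LB LC B₀ ∧
          ∃ col : κ, ∀ A₀ : Set C, A₀ ⊆ B₀ → IsCopy LA LC A₀ → c A₀ = col := by
  cases nonempty_fintype A
  cases nonempty_fintype B
  obtain ⟨N, hN⟩ := product_ramsey κ (fun _ : Fin n => Fintype.card A) fun _ => Fintype.card B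
  refine ⟨∀ i, Fin (N i), inferInstance, CoordLT, fun i => inferInstance, fun c => ?_⟩
  obtain ⟨M, hM, col, hcol⟩ := hN fun S => c (coordSpan LA S)
  obtain ⟨F, hF, hFM⟩ := exists_coordStrictMono LB M hM
  refine ⟨Set.range F, hF.isCopy_range, col, ?_⟩
  rintro _ heF ⟨e, rfl, -, he⟩
  have he_mono : CoordStrictMono LA e := hF.of_range_subset (fun i a b => (he i a b).1) heF
  have he_mem (a : A) (i : Fin n) : e a i ∈ M i := by
    obtain ⟨b, hb⟩ := heF ⟨a, rfl⟩
    exact hb ▸ hFM b i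
  rw [← he_mono.coordSpan_eq_range (S := fun i => univ.image (e · i)) (by simp)]
  refine hcol _ (fun i => image_subset_iff.2 fun a _ => he_mem a i) fun i => ?_
  rw [card_image_of_injective _ (he_mono.injective_apply i), card_univ]

/-- the class of finite sets with `n` linear orders has the Ramsey property:
for every `k ≥ 1` and finite structures `A` embeddable in `B`, there is a finite structure
`C` such that every `k`-colouring of the copies of `A` in `C` is constant on the copies of
`A` inside some copy of `B` in `C`. -/
theorem stmt_12 (n : ℕ) (hn : 2 ≤ n) (k : ℕ) (hk : 1 ≤ k)
    (A B : Type) [Fintype A] [Fintype B]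
    (LA : Fin n → A → A → Prop) (LB : Fin n → B → B → Prop)
    (hLA : ∀ i, IsStrictTotalOrder A (LA i))
    (hLB : ∀ i, IsStrictTotalOrder B (LB i))
    (hAB : ∃ e : A → B, Function.Injective e ∧
      ∀ i : Fin n, ∀ a b : A, LA i a b ↔ LB i (e a) (e b)) :
    ∃ (C : Type) (_ : Fintype C) (LC : Fin n → C → C → Prop),
      (∀ i, IsStrictTotalOrder C (LC i)) ∧
      ∀ c : Set C → Fin k,
        ∃ B₀ : Set C, IsCopy LB LC B₀ ∧
          ∃ col : Fin k, ∀ A₀ : Set C, A₀ ⊆ B₀ → IsCopy LA LC A₀ → c A₀ = col := by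
  have : NeZero n := ⟨by omega⟩
  exact stmt_12_general (Fin k) LA LB
end

section
/- Let n ≥ 2 and let (L_1,<_1),...,(L_n,<_n) be linear orders, each with at least two elements. Let < be the product order on L_1 × ... × L_n. If ≺_1,...,≺_n are linear orders on L_1 × ... × L_n whose intersection is <, then there exists a permutation σ of {1,...,n} such that for all i ≤ n and all a, b ∈ L_1 × ... × L_n: if a_i <_i b_i then a ≺_σ(i) b. -/
/-!
Say that a relation on the product puts the slice `a k = x` below the slice `a k = y` if it ranks
every point of the first slice below every point of the second. Whenever `x < y`, some order of a
finite realizer does this: otherwise each order `j` has a counterexample `a j`, `b j`. An upper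
bound `u` of all the `a j` and a lower bound `l` of all the `b j`, chosen in the respective slices,
are then ranked as `u` below `l` by no order, so `l ≤ u`, contradicting `x < y`. On the other hand,
an asymmetric relation cannot do this for two different coordinates. If there are no more orders
than coordinates, it follows that each coordinate owns exactly one order, the same for all `x < y`.
-/

/-- A realizer of a preorder, in the sense of order dimension: a family of strict linear orders
whose intersection is `<`. -/
structure IsRealizer {κ P : Type*} [Preorder P] (R : κ → P → P → Prop) : Prop where
  isStrictTotalOrder (j : κ) : IsStrictTotalOrder P (R j)
  lt_iff (a b : P) : a < b ↔ ∀ j, R j a b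

/-- The relation `r` puts the slice of the product where the `k`-th coordinate is `x` entirely below
the slice where it is `y`. -/
def SliceBelow {ι : Type*} {L : ι → Type*} (r : (∀ i, L i) → (∀ i, L i) → Prop) (k : ι)
    (x y : L k) : Prop :=
  ∀ a b : ∀ i, L i, a k = x → b k = y → r a b

theorem SliceBelow.coord_unique {ι : Type*} {L : ι → Type*} [∀ i, Nonempty (L i)]
    {r : (∀ i, L i) → (∀ i, L i) → Prop} [Std.Asymm r] {k m : ι} {x y : L k} {z w : L m}
    (hk : SliceBelow r k x y) (hm : SliceBelow r m z w) : k = m := by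
  classical
  by_contra hne
  obtain ⟨c⟩ : Nonempty (∀ i, L i) := inferInstance
  let a := Function.update (Function.update c k x) m w
  let b := Function.update (Function.update c k y) m z
  have hab : r a b := hk a b (by simp [a, hne]) (by simp [b, hne])
  have hba : r b a := hm b a (by simp [b]) (by simp [a])
  exact Std.Asymm.asymm a b hab hba

namespace IsRealizer

variable {κ P : Type*} {R : κ → P → P → Prop} {a b c d : P}

theorem exists_rel_of_not_le [Preorder P] (hR : IsRealizer R) (h : ¬ b ≤ a) : ∃ j, R j a b := by
  by_contra! hrel
  have hba (j : κ) : R j b a := by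
    have := hR.isStrictTotalOrder j
    obtain hab | rfl | hba := trichotomous_of (R j) a b
    · exact absurd hab (hrel j)
    · exact absurd le_rfl h
    · exact hba
  exact h ((hR.lt_iff b a).2 hba).le

theorem rel_of_le_of_rel_of_le [PartialOrder P] (hR : IsRealizer R) {j : κ} (hab : a ≤ b)
    (hbc : R j b c) (hcd : c ≤ d) : R j a d := by
  have := hR.isStrictTotalOrder j
  have hac : R j a c := by
    obtain rfl | hab := hab.eq_or_lt
    · exact hbc
    · exact _root_.trans ((hR.lt_iff a b).1 hab j) hbc
  obtain rfl | hcd := hcd.eq_or_lt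
  · exact hac
  · exact _root_.trans hac ((hR.lt_iff c d).1 hcd j)

theorem exists_sliceBelow {ι : Type*} [Finite κ] {L : ι → Type*} [∀ i, Lattice (L i)]
    [∀ i, Nonempty (L i)] {R : κ → (∀ i, L i) → (∀ i, L i) → Prop} (hR : IsRealizer R)
    {k : ι} {x y : L k} (hyx : ¬ y ≤ x) : ∃ j, SliceBelow (R j) k x y := by
  classical
  by_contra! h
  simp only [SliceBelow, not_forall] at h
  choose a b hax hby hab using h
  obtain ⟨u, hu⟩ := Finite.exists_le a
  obtain ⟨l, hl⟩ := Finite.exists_ge b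
  have hnle : ¬ Function.update l k y ≤ Function.update u k x := fun hle =>
    hyx (by simpa using hle k)
  obtain ⟨j, hj⟩ := hR.exists_rel_of_not_le hnle
  have hau : a j ≤ Function.update u k x := le_update_iff.2 ⟨(hax j).le, fun i _ => hu j i⟩
  have hlb : Function.update l k y ≤ b j := update_le_iff.2 ⟨(hby j).ge, fun i _ => hl j i⟩
  exact hab j (hR.rel_of_le_of_rel_of_le hau hj hlb)

end IsRealizer

theorem stmt_15_general {ι κ : Type*} [Finite κ] {L : ι → Type*} [∀ i, Lattice (L i)]
    [∀ i, Nontrivial (L i)] {R : κ → (∀ i, L i) → (∀ i, L i) → Prop} (hR : IsRealizer R)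
    (hcard : Nat.card κ ≤ Nat.card ι) :
    ∃ σ : ι ≃ κ, ∀ (i : ι) (a b : ∀ i, L i), a i < b i → R (σ i) a b := by
  have := hR.isStrictTotalOrder
  choose x y hxy using fun i => exists_lt_of_directed_le (L i)
  choose s hs using fun i => hR.exists_sliceBelow (hxy i).not_ge
  have hs_inj : s.Injective := fun i m him => (hs i).coord_unique (him ▸ hs m)
  have hs_bij : s.Bijective := hs_inj.bijective_of_nat_card_le hcard
  refine ⟨Equiv.ofBijective s hs_bij, fun i a b hab => ?_⟩
  obtain ⟨j, hj⟩ := hR.exists_sliceBelow hab.not_ge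
  obtain ⟨m, rfl⟩ := hs_bij.surjective j
  obtain rfl : m = i := (hs m).coord_unique hj
  exact hj a b rfl rfl

/-- if `≺_1, …, ≺_n` are linear orders on a product `L_1 × ⋯ × L_n` of linear
orders (each with at least two elements) whose intersection is the product order, then some
permutation `σ` of `{1,…,n}` satisfies: `a_i <_i b_i` implies `a ≺_{σ(i)} b`. -/
theorem stmt_15 (n : ℕ) (hn : 2 ≤ n)
    (L : Fin n → Type) [∀ i, LinearOrder (L i)]
    (hL : ∀ i, ∃ a b : L i, a ≠ b)
    (R : Fin n → (∀ i, L i) → (∀ i, L i) → Prop)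
    (hR : ∀ j, IsStrictTotalOrder (∀ i, L i) (R j))
    (hreal : ∀ a b : ∀ i, L i, ((∀ i, a i ≤ b i) ∧ a ≠ b) ↔ ∀ j, R j a b) :
    ∃ σ : Equiv.Perm (Fin n),
      ∀ (i : Fin n) (a b : ∀ i, L i), a i < b i → R (σ i) a b := by
  have (i : Fin n) : Nontrivial (L i) := ⟨hL i⟩
  exact stmt_15_general ⟨hR, fun a b => lt_iff_le_and_ne.trans (hreal a b)⟩ le_rfl
end
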